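/- arXiv:2306.07870 — 2 statements merged into one kernel-verified Lean document; each statement's English description precedes it below -/
import Mathlib

section
/- Let p be a binary word of length l with r runs, r_i of which are of size i, and let r_{2,b} be the number of runs of p of size 2 that are either the first or the last run of p. For any n ≥ 3: if l ≥ 3, then B_{n,p}(3) = r_1 · binomial(n − r − 1, l − r + 1) + (r_2 − r_{2,b}) · binomial(n − r − 1, l − r) + r_{2,b} · binomial(n − r, l − r + 1); if l < 3, then B_{n,p}(3) = binomial(n, 3) when r = 1 and B_{n,p}(3) = 3(n − 3) when r = 2. -/
/-- `occ p w` is the number of occurrences of `p` as a subsequence of `w`,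
i.e. the number of choices of indices `i₁ < ⋯ < i_l` in `w` matching `p`. -/
def occ (p w : List Bool) : ℕ := w.sublists.count p

/-- `B n p k` is the number of binary words of length `n` with exactly `k` occurrences of `p`. -/
noncomputable def B (n : ℕ) (p : List Bool) (k : ℕ) : ℕ :=
  Nat.card {w : List Bool // w.length = n ∧ occ p w = k}

/-- The list of runs (maximal blocks of consecutive equal letters) of a binary word. -/
def runs (p : List Bool) : List (List Bool) := p.splitBy (· == ·)

/-- The number of runs of a binary word. -/
def numRuns (p : List Bool) : ℕ := (runs p).length

/-- The number of runs of size `i` of a binary word. -/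
def numRunsOfSize (p : List Bool) (i : ℕ) : ℕ := ((runs p).map List.length).count i

/-- `maxOcc n p` is the maximum number of occurrences of `p` among binary words of length `n`. -/
noncomputable def maxOcc (n : ℕ) (p : List Bool) : ℕ :=
  sSup {k | ∃ w : List Bool, w.length = n ∧ occ p w = k}

/-- `p` has an internal zero at `n` if the sequence `(B n p k)_{k ≥ 0}` has an internal zero. -/
def HasInternalZeroAt (p : List Bool) (n : ℕ) : Prop :=
  ∃ k₁ k₂ k₃ : ℕ, k₁ < k₂ ∧ k₂ < k₃ ∧ B n p k₁ ≠ 0 ∧ B n p k₂ = 0 ∧ B n p k₃ ≠ 0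

/-- The number of runs of size `i` that are the first or last run of `p`. -/
def numBoundaryRunsOfSize (p : List Bool) (i : ℕ) : ℕ :=
  (if ((runs p).map List.length).headD 0 = i then 1 else 0) +
  (if 1 < numRuns p ∧ ((runs p).map List.length).getLastD 0 = i then 1 else 0)

/-! Prepending a letter to `w` turns the number of occurrences of `a :: q` into
`occ (a :: q) w + occ q w` or leaves it unchanged, which yields recursions for the generating
functions of the words with prescribed numbers of occurrences. They show that
`∑ B n p 1 xⁿ = x ^ l / (1 - x) ^ (l - r + 2)`, and that for `l ≥ 3` a word with three occurrences
comes from a word with one occurrence in exactly one of two ways: the letter of a run of size 1 is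
tripled (a factor `x ^ 2`), or a third copy of its letter is added to a run of size 2. In the second
case the three copies have two gaps, and a letter different from them can stand in neither gap,
unless the run is the first or last one: then the outer gap is free. Compared with the single free
gap of the original run, this is a factor `x * (1 - x)`, or `x` for a run at the boundary. -/

open PowerSeries

section Runs

theorem exists_replicate_append {α : Type*} (a : α) (p : List α) :
    ∃ m q, p = List.replicate m a ++ q ∧ q.head? ≠ some a := by
  induction p with
  | nil => exact ⟨0, [], rfl, by simp⟩
  | cons b p ih =>
    by_cases hba : b = a
    · obtain ⟨m, q, rfl, hq⟩ := ih
      exact ⟨m + 1, q, by rw [hba, List.replicate_succ, List.cons_append], hq⟩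
    · exact ⟨0, b :: p, rfl, by simpa using hba⟩

theorem run_induction {α : Type*} {P : List α → Prop} (nil : P [])
    (replicate_append : ∀ a m q, q.head? ≠ some a → P q → P (List.replicate (m + 1) a ++ q)) :
    ∀ p, P p
  | [] => nil
  | a :: p => by
    obtain ⟨m, q, hp, hq⟩ := exists_replicate_append a p
    rw [hp]
    exact replicate_append a m q hq (run_induction nil replicate_append q)
termination_by p => p.length
decreasing_by simp [hp]

variable {a : Bool} {q : List Bool}

theorem runs_replicate_append (m : ℕ) (hq : q.head? ≠ some a) :
    runs (List.replicate (m + 1) a ++ q) = List.replicate (m + 1) a :: runs q := by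
  unfold runs
  rw [List.splitBy_append, List.splitBy_of_isChain (by simp), List.singleton_append]
  · exact List.isChain_replicate_of_rel _ (beq_self_eq_true a)
  · intro x hx y hy
    obtain rfl : a = x := by simpa [List.getLast?_replicate] using hx
    rw [beq_eq_false_iff_ne]
    rintro rfl
    exact hq hy

/-- The sizes of the runs of a binary word, from first to last. -/
def runLengths (p : List Bool) : List ℕ := (runs p).map List.length

theorem runLengths_replicate_append (m : ℕ) (hq : q.head? ≠ some a) :
    runLengths (List.replicate (m + 1) a ++ q) = (m + 1) :: runLengths q := by
  rw [runLengths, runs_replicate_append m hq, List.map_cons, List.length_replicate, runLengths]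

theorem runLengths_eq_nil {p : List Bool} : runLengths p = [] ↔ p = [] := by
  rw [runLengths, List.map_eq_nil_iff, runs, List.splitBy_eq_nil]

theorem numRuns_replicate_append (m : ℕ) (hq : q.head? ≠ some a) :
    numRuns (List.replicate (m + 1) a ++ q) = numRuns q + 1 := by
  rw [numRuns, runs_replicate_append m hq, List.length_cons, numRuns]

theorem numRunsOfSize_replicate_append (m i : ℕ) (hq : q.head? ≠ some a) :
    numRunsOfSize (List.replicate (m + 1) a ++ q) i =
      numRunsOfSize q i + if m + 1 = i then 1 else 0 := by
  simp only [numRunsOfSize, runs_replicate_append m hq, List.map_cons, List.length_replicate,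
    List.count_cons, beq_iff_eq]

theorem numBoundaryRunsOfSize_replicate_append (m i : ℕ) (hq : q.head? ≠ some a) :
    numBoundaryRunsOfSize (List.replicate (m + 1) a ++ q) i =
      (if m + 1 = i then 1 else 0) + if (runLengths q).getLast? = some i then 1 else 0 := by
  have hlast : (1 < numRuns q + 1 ∧ ((m + 1) :: runLengths q).getLastD 0 = i) ↔
      (runLengths q).getLast? = some i := by
    rw [numRuns, ← List.length_map List.length, ← runLengths]
    rcases runLengths q with _ | ⟨k, L⟩ <;> simp [List.getLast?_cons]
  rw [numBoundaryRunsOfSize, numRuns_replicate_append m hq, ← runLengths,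
    runLengths_replicate_append m hq, if_congr hlast rfl rfl, List.headD_cons]

theorem numBoundaryRunsOfSize_le_numRunsOfSize {p : List Bool} (hp : p ≠ []) (i : ℕ) :
    numBoundaryRunsOfSize p i ≤ numRunsOfSize p i := by
  induction p using run_induction with
  | nil => exact absurd rfl hp
  | replicate_append a m q hq _ =>
    rw [numBoundaryRunsOfSize_replicate_append m i hq, numRunsOfSize_replicate_append m i hq,
      add_comm]
    gcongr
    split_ifs with hlast
    · exact List.count_pos_iff.2 (List.mem_of_getLast? hlast)
    · exact Nat.zero_le _

theorem numRuns_add_numRunsOfSize_two_le (p : List Bool) :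
    numRuns p + numRunsOfSize p 2 ≤ p.length := by
  induction p using run_induction with
  | nil => simp [numRuns, numRunsOfSize, runs]
  | replicate_append a m q hq ih =>
    rw [numRuns_replicate_append m hq, numRunsOfSize_replicate_append m 2 hq, List.length_append,
      List.length_replicate]
    split_ifs <;> omega

end Runs

section Occurrences

variable {a b : Bool}

theorem bool_eq_or_eq_of_ne (hab : a ≠ b) (c : Bool) : c = a ∨ c = b := by
  decide +revert

theorem occ_pos_iff_sublist {p w : List Bool} : 0 < occ p w ↔ p.Sublist w := by
  rw [occ, List.count_pos_iff, List.mem_sublists]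

theorem occ_cons_right (p : List Bool) (b : Bool) (w : List Bool) :
    occ p (b :: w) = occ p w + (w.sublists.map (b :: ·)).count p := by
  rw [occ, (List.sublists_cons_perm_append b w).count_eq, List.count_append, occ]

theorem occ_cons_self (a : Bool) (q w : List Bool) :
    occ (a :: q) (a :: w) = occ (a :: q) w + occ q w := by
  rw [occ_cons_right, List.count_map_of_injective _ _ (List.cons_injective), occ, occ]

theorem occ_cons_of_head?_ne {p : List Bool} (hp : p.head? ≠ some b) (w : List Bool) :
    occ p (b :: w) = occ p w := by
  rw [occ_cons_right, List.count_eq_zero_of_not_mem, add_zero]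
  intro hmem
  obtain ⟨v, -, rfl⟩ := List.mem_map.1 hmem
  exact hp rfl

theorem occ_cons_of_ne (hab : a ≠ b) (q w : List Bool) : occ (a :: q) (b :: w) = occ (a :: q) w :=
  occ_cons_of_head?_ne (by simpa using hab) w

theorem occ_cons_nil (a : Bool) (q : List Bool) : occ (a :: q) [] = 0 := by
  simp [occ]

theorem occ_nil (w : List Bool) : occ [] w = 1 := by
  induction w with
  | nil => rfl
  | cons b w ih => rw [occ_cons_of_head?_ne (by simp), ih]

theorem occ_pos_of_occ_cons_pos {q w : List Bool} (h : 0 < occ (a :: q) w) : 0 < occ q w :=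
  occ_pos_iff_sublist.2 (List.sublist_of_cons_sublist (occ_pos_iff_sublist.1 h))

theorem one_lt_occ_of_occ_cons_cons_self_pos {q w : List Bool} (h : 0 < occ (a :: a :: q) w) :
    1 < occ (a :: q) w := by
  induction w with
  | nil => simp [occ_cons_nil] at h
  | cons b w ih =>
    by_cases hab : a = b
    · subst hab
      rw [occ_cons_self] at h ⊢
      rcases Nat.eq_zero_or_pos (occ (a :: a :: q) w) with h0 | hpos
      · have := occ_pos_of_occ_cons_pos (a := a) (q := q) (w := w)
        omega
      · exact Nat.lt_add_right _ (ih hpos)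
    · rw [occ_cons_of_ne hab] at h ⊢
      exact ih h

theorem two_lt_occ_add_occ_of_occ_cons_cons_cons_pos {c : Bool} {q w : List Bool}
    (h : 0 < occ (a :: b :: c :: q) w) : 2 < occ (b :: c :: q) w + occ (c :: q) w := by
  have hbc_pos := occ_pos_of_occ_cons_pos h
  have hc_pos := occ_pos_of_occ_cons_pos hbc_pos
  by_cases hab : a = b
  · subst hab
    have := one_lt_occ_of_occ_cons_cons_self_pos h
    omega
  by_cases hbc : b = c
  · subst hbc
    have := one_lt_occ_of_occ_cons_cons_self_pos hbc_pos
    omega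
  obtain rfl : a = c := ((bool_eq_or_eq_of_ne hab c).resolve_right (Ne.symm hbc)).symm
  induction w with
  | nil => simp [occ_cons_nil] at h
  | cons d w ih =>
    have hba_pos := occ_pos_of_occ_cons_pos (a := a) (q := b :: a :: q) (w := w)
    have ha_pos := occ_pos_of_occ_cons_pos (a := b) (q := a :: q) (w := w)
    have hq_pos := occ_pos_of_occ_cons_pos (a := a) (q := q) (w := w)
    obtain rfl | rfl := bool_eq_or_eq_of_ne hab d
    · simp only [occ_cons_self, occ_cons_of_ne (Ne.symm hab)] at h ⊢
      omega
    · simp only [occ_cons_self, occ_cons_of_ne hab] at h ⊢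
      omega

end Occurrences

section WordGF

/-- The generating function by length of the words satisfying `P`. Its coefficients are integers
rather than naturals so that it can be multiplied by `1 - X`. -/
noncomputable def wordGF {α : Type*} (P : List α → Prop) : ℤ⟦X⟧ :=
  .mk fun n => (Nat.card {w : List α // w.length = n ∧ P w} : ℤ)

/-- The geometric series `1 / (1 - X)`. -/
noncomputable def geomSeries : ℤ⟦X⟧ := .mk 1

theorem geomSeries_mul_one_sub : geomSeries * (1 - X) = 1 := mk_one_mul_one_sub_eq_one ℤ

theorem coeff_X_pow_mul_geomSeries_pow {n m k : ℕ} (h : k ≠ 0 ∨ m ≤ n) :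
    coeff n (X ^ m * geomSeries ^ (k + 1)) = ((n + k - m).choose k : ℤ) := by
  rw [coeff_X_pow_mul', geomSeries, mk_one_pow_eq_mk_choose_add, coeff_mk]
  split_ifs with hmn
  · rw [show n + k - m = k + (n - m) by omega]
  · rw [Nat.choose_eq_zero_of_lt (by omega), Nat.cast_zero]

variable {α : Type*}

theorem wordGF_congr {P Q : List α → Prop} (h : ∀ w, P w ↔ Q w) : wordGF P = wordGF Q := by
  rw [funext fun w => propext (h w)]

theorem wordGF_eq_zero {P : List α → Prop} (h : ∀ w, ¬ P w) : wordGF P = 0 := by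
  ext n
  simp [wordGF, h]

theorem finite_length_eq_and [Finite α] (P : List α → Prop) (n : ℕ) :
    Finite {w : List α // w.length = n ∧ P w} :=
  (List.finite_length_eq α n).subset fun _ hw => hw.1

theorem wordGF_eq_add [Finite α] {P Q R : List α → Prop} (h : ∀ w, P w ↔ Q w ∨ R w)
    (hQR : ∀ w, Q w → ¬ R w) : wordGF P = wordGF Q + wordGF R := by
  ext n
  have hunion : {w : List α | w.length = n ∧ P w} =
      {w | w.length = n ∧ Q w} ∪ {w | w.length = n ∧ R w} := by
    ext w
    simp only [Set.mem_ofPred_eq, Set.mem_union, h, and_or_left]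
  have hdisj : Disjoint {w : List α | w.length = n ∧ Q w} {w | w.length = n ∧ R w} :=
    Set.disjoint_left.2 fun w hw hw' => hQR w hw.2 hw'.2
  rw [wordGF, wordGF, wordGF, map_add, coeff_mk, coeff_mk, coeff_mk]
  exact_mod_cast hunion ▸ Set.ncard_union_eq hdisj (finite_length_eq_and Q n)
    (finite_length_eq_and R n)

/-- Splits a nonempty word into its first letter and the remaining word. -/
def consEquiv (P : List α → Prop) (n : ℕ) : {w : List α // w.length = n + 1 ∧ P w} ≃
    Σ a, {w : List α // w.length = n ∧ P (a :: w)} where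
  toFun
    | ⟨a :: w, hw⟩ => ⟨a, w, Nat.succ_injective hw.1, hw.2⟩
  invFun w := ⟨w.1 :: w.2.1, congrArg Nat.succ w.2.2.1, w.2.2.2⟩
  left_inv
    | ⟨_ :: _, _⟩ => rfl
  right_inv _ := rfl

open scoped Classical in
theorem wordGF_eq_ite_add_X_mul_sum [Fintype α] (P : List α → Prop) :
    wordGF P = (if P [] then 1 else 0) + X * ∑ a, wordGF fun w => P (a :: w) := by
  ext n
  cases n with
  | zero =>
    rw [map_add, coeff_zero_X_mul, add_zero, wordGF, coeff_mk]
    split_ifs with h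
    · have heq (w : List α) : w.length = 0 ∧ P w ↔ w = [] := by
        rw [List.length_eq_zero_iff, and_iff_left_iff_imp]
        rintro rfl
        exact h
      simp only [heq]
      simp
    · have heq (w : List α) : ¬ (w.length = 0 ∧ P w) := by
        rw [List.length_eq_zero_iff]
        rintro ⟨rfl, hw⟩
        exact h hw
      simp only [heq]
      simp
  | succ n =>
    have := finite_length_eq_and (α := α)
    have hcoeff : coeff (n + 1) (if P [] then 1 else 0 : ℤ⟦X⟧) = 0 := by
      split_ifs <;> simp [coeff_one]
    rw [map_add, hcoeff, zero_add, coeff_succ_X_mul, map_sum]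
    simp only [wordGF, coeff_mk, Nat.card_congr (consEquiv P n), Nat.card_sigma, Nat.cast_sum]

variable {a b : Bool} {P Q : List Bool → Prop}

open scoped Classical in
theorem wordGF_eq_ite_add_X_mul_add (hab : a ≠ b) (P : List Bool → Prop) :
    wordGF P = (if P [] then 1 else 0) +
      X * ((wordGF fun w => P (a :: w)) + wordGF fun w => P (b :: w)) := by
  rw [wordGF_eq_ite_add_X_mul_sum P, Fintype.sum_eq_add a b hab]
  rintro c ⟨hca, hcb⟩
  exact absurd (bool_eq_or_eq_of_ne hab c) (not_or.2 ⟨hca, hcb⟩)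

theorem wordGF_eq_X_mul (hab : a ≠ b) (hnil : ¬ P []) (ha : ∀ w, P (a :: w) ↔ Q w)
    (hb : ∀ w, ¬ P (b :: w)) : wordGF P = X * wordGF Q := by
  rw [wordGF_eq_ite_add_X_mul_add hab, if_neg hnil, wordGF_congr ha, wordGF_eq_zero hb, zero_add,
    add_zero]

theorem wordGF_eq_X_mul_geomSeries_mul (hab : a ≠ b) (hnil : ¬ P []) (ha : ∀ w, P (a :: w) ↔ Q w)
    (hb : ∀ w, P (b :: w) ↔ P w) : wordGF P = X * geomSeries * wordGF Q := by
  have hrec := wordGF_eq_ite_add_X_mul_add hab P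
  rw [if_neg hnil, wordGF_congr ha, wordGF_congr hb] at hrec
  linear_combination geomSeries * hrec - wordGF P * geomSeries_mul_one_sub

end WordGF

section JointGF

variable {a b : Bool}

/-- The generating function of the words with `i` occurrences of `a :: q` and `j` of `q`. -/
noncomputable def jointGF (i j : ℕ) (a : Bool) (q : List Bool) : ℤ⟦X⟧ :=
  wordGF fun w => occ (a :: q) w = i ∧ occ q w = j

theorem jointGF_zero_one_nil (a : Bool) : jointGF 0 1 a [] = geomSeries := by
  obtain ⟨b, hba⟩ := exists_ne a
  have hrec := wordGF_eq_ite_add_X_mul_add hba.symm fun w => occ [a] w = 0 ∧ occ [] w = 1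
  simp only [occ_cons_nil, occ_nil, occ_cons_self, occ_cons_of_ne hba.symm, and_true, if_true]
    at hrec
  rw [wordGF_eq_zero fun w => Nat.succ_ne_zero _] at hrec
  simp only [jointGF, occ_nil, and_true]
  linear_combination
    geomSeries * hrec - (wordGF fun w => occ [a] w = 0) * geomSeries_mul_one_sub

theorem jointGF_nil_of_ne_one {j : ℕ} (hj : j ≠ 1) (i : ℕ) (a : Bool) : jointGF i j a [] = 0 :=
  wordGF_eq_zero fun w hw => hj (hw.2.symm.trans (occ_nil w))

theorem jointGF_zero_cons_self {j : ℕ} (hj : j ≠ 0) (a : Bool) (q : List Bool) :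
    jointGF 0 j a (a :: q) = X * geomSeries * jointGF 0 j a q := by
  obtain ⟨b, hba⟩ := exists_ne a
  apply wordGF_eq_X_mul_geomSeries_mul hba.symm
  · simp [occ_cons_nil, hj.symm]
  · intro w
    have := occ_pos_of_occ_cons_pos (a := a) (q := a :: q) (w := w)
    simp only [occ_cons_self]
    omega
  · intro w
    simp only [occ_cons_of_ne hba.symm]

theorem jointGF_zero_replicate_append {j : ℕ} (hj : j ≠ 0) (a : Bool) (m : ℕ) (q : List Bool) :
    jointGF 0 j a (List.replicate m a ++ q) = (X * geomSeries) ^ m * jointGF 0 j a q := by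
  induction m with
  | zero => rw [List.replicate_zero, List.nil_append, pow_zero, one_mul]
  | succ m ih =>
    rw [List.replicate_succ, List.cons_append, jointGF_zero_cons_self hj, ih]
    ring

theorem jointGF_zero_one_cons_of_ne (hab : a ≠ b) (q : List Bool) :
    jointGF 0 1 a (b :: q) = X * jointGF 0 1 b q := by
  apply wordGF_eq_X_mul hab.symm
  · simp [occ_cons_nil]
  · intro w
    have := occ_pos_of_occ_cons_pos (a := a) (q := b :: q) (w := w)
    have := occ_pos_of_occ_cons_pos (a := b) (q := q) (w := w)
    simp only [occ_cons_self, occ_cons_of_ne hab]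
    omega
  · intro w
    simp only [occ_cons_self, occ_cons_of_ne hab.symm]
    omega

theorem jointGF_one_one_nil (a : Bool) : jointGF 1 1 a [] = X * geomSeries ^ 2 := by
  obtain ⟨b, hba⟩ := exists_ne a
  rw [sq, ← mul_assoc]
  nth_rw 2 [← jointGF_zero_one_nil a]
  apply wordGF_eq_X_mul_geomSeries_mul hba.symm
  · simp [occ_cons_nil]
  · intro w
    simp only [occ_cons_self, occ_nil, and_true]
    omega
  · intro w
    simp only [occ_cons_of_ne hba.symm, occ_nil]

theorem jointGF_one_one_cons_self (a : Bool) (q : List Bool) : jointGF 1 1 a (a :: q) = 0 := by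
  refine wordGF_eq_zero fun w hw => ?_
  have := one_lt_occ_of_occ_cons_cons_self_pos (a := a) (q := q) (w := w)
  omega

theorem jointGF_one_one_cons_of_ne (hab : a ≠ b) (q : List Bool) :
    jointGF 1 1 a (b :: q) = X * jointGF 0 1 a (b :: q) := by
  apply wordGF_eq_X_mul hab
  · simp [occ_cons_nil]
  · intro w
    simp only [occ_cons_self, occ_cons_of_ne hab.symm]
    omega
  · intro w
    have := occ_pos_of_occ_cons_pos (a := a) (q := b :: q) (w := w)
    have := occ_pos_of_occ_cons_pos (a := b) (q := q) (w := w)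
    simp only [occ_cons_self, occ_cons_of_ne hab]
    omega

end JointGF

section SplitGF

variable {a b : Bool} {q : List Bool}

/-- The generating function of the words `w` such that `a :: w` has three occurrences of `a :: q`,
at least one of which avoids the letter prepended to `w`. -/
noncomputable def splitGF (a : Bool) (q : List Bool) : ℤ⟦X⟧ :=
  wordGF fun w => 0 < occ (a :: q) w ∧ occ (a :: q) w + occ q w = 3

/-- The part of `splitGF b q` coming from the words without occurrence of `a :: b :: q`. It plays
the role of `splitGF b q` when `b :: q` is preceded by a run of the letter `a`. -/
noncomputable def splitGFAfter (a b : Bool) (q : List Bool) : ℤ⟦X⟧ :=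
  wordGF fun w => occ (a :: b :: q) w = 0 ∧ 0 < occ (b :: q) w ∧ occ (b :: q) w + occ q w = 3

theorem jointGF_zero_three_cons_of_ne (hab : a ≠ b) (q : List Bool) :
    jointGF 0 3 a (b :: q) = X * (jointGF 0 3 b q + splitGFAfter a b q) := by
  have hadd : (wordGF fun w => occ (a :: b :: q) w = 0 ∧ occ (b :: q) w + occ q w = 3) =
      jointGF 0 3 b q + splitGFAfter a b q := by
    refine wordGF_eq_add (fun w => ?_) fun w => ?_
    · have := occ_pos_of_occ_cons_pos (a := a) (q := b :: q) (w := w)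
      omega
    · omega
  rw [← hadd]
  apply wordGF_eq_X_mul hab.symm
  · simp [occ_cons_nil]
  · intro w
    simp only [occ_cons_self, occ_cons_of_ne hab]
  · intro w
    simp only [occ_cons_self, occ_cons_of_ne hab.symm]
    omega

theorem splitGFAfter_of_head?_ne (hab : a ≠ b) (hq : q.head? ≠ some b) :
    splitGFAfter a b q = X ^ 2 * jointGF 0 1 b q := by
  have hone : (wordGF fun w => occ (a :: b :: q) w = 0 ∧ occ (b :: q) w = 1 ∧ occ q w = 1) =
      X * jointGF 0 1 b q := by
    apply wordGF_eq_X_mul hab.symm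
    · simp [occ_cons_nil]
    · intro w
      have := occ_pos_of_occ_cons_pos (a := a) (q := b :: q) (w := w)
      simp only [occ_cons_self, occ_cons_of_ne hab, occ_cons_of_head?_ne hq]
      omega
    · intro w
      simp only [occ_cons_self, occ_cons_of_ne hab.symm]
      omega
  rw [sq, mul_assoc, ← hone]
  apply wordGF_eq_X_mul hab.symm
  · simp [occ_cons_nil]
  · intro w
    have := occ_pos_of_occ_cons_pos (a := b) (q := q) (w := w)
    simp only [occ_cons_self, occ_cons_of_ne hab, occ_cons_of_head?_ne hq]
    omega
  · intro w
    simp only [occ_cons_self, occ_cons_of_ne hab.symm]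
    omega

theorem splitGFAfter_cons_self (hab : a ≠ b) (q : List Bool) :
    splitGFAfter a b (b :: q) = X * jointGF 1 1 b q := by
  apply wordGF_eq_X_mul hab.symm
  · simp [occ_cons_nil]
  · intro w
    have := occ_pos_of_occ_cons_pos (a := a) (q := b :: b :: q) (w := w)
    have := one_lt_occ_of_occ_cons_cons_self_pos (a := b) (q := q) (w := w)
    have := occ_pos_of_occ_cons_pos (a := b) (q := q) (w := w)
    simp only [occ_cons_self, occ_cons_of_ne hab]
    omega
  · intro w
    simp only [occ_cons_self, occ_cons_of_ne hab.symm]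
    omega

theorem splitGF_nil (a : Bool) : splitGF a [] = X * geomSeries * jointGF 1 1 a [] := by
  obtain ⟨b, hba⟩ := exists_ne a
  apply wordGF_eq_X_mul_geomSeries_mul hba.symm
  · simp [occ_cons_nil]
  · intro w
    simp only [occ_cons_self, occ_nil, and_true]
    omega
  · intro w
    simp only [occ_cons_of_ne hba.symm, occ_nil]

theorem splitGF_cons_self (a : Bool) (q : List Bool) :
    splitGF a (a :: q) = X * geomSeries * jointGF 1 1 a q := by
  obtain ⟨b, hba⟩ := exists_ne a
  apply wordGF_eq_X_mul_geomSeries_mul hba.symm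
  · simp [occ_cons_nil]
  · intro w
    have := one_lt_occ_of_occ_cons_cons_self_pos (a := a) (q := q) (w := w)
    have := occ_pos_of_occ_cons_pos (a := a) (q := q) (w := w)
    simp only [occ_cons_self]
    omega
  · intro w
    simp only [occ_cons_of_ne hba.symm]

theorem splitGF_singleton_of_ne (hab : a ≠ b) :
    splitGF a [b] = 2 * X * jointGF 1 1 a [b] := by
  classical
  have ha (w : List Bool) : 0 < occ [a, b] (a :: w) ∧ occ [a, b] (a :: w) + occ [b] (a :: w) = 3 ↔
      occ [a, b] w = 1 ∧ occ [b] w = 1 := by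
    have := occ_pos_of_occ_cons_pos (a := a) (q := [b]) (w := w)
    simp only [occ_cons_self, occ_cons_of_ne hab.symm]
    omega
  have hb (w : List Bool) : 0 < occ [a, b] (b :: w) ∧ occ [a, b] (b :: w) + occ [b] (b :: w) = 3 ↔
      occ [a, b] w = 1 ∧ occ [b] w = 1 := by
    have := occ_pos_of_occ_cons_pos (a := a) (q := [b]) (w := w)
    simp only [occ_cons_self, occ_cons_of_ne hab, occ_nil]
    omega
  rw [splitGF, wordGF_eq_ite_add_X_mul_add hab, wordGF_congr ha, wordGF_congr hb, ← jointGF]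
  simp only [occ_cons_nil, lt_irrefl, false_and, if_false]
  ring

theorem splitGF_cons_cons_of_ne (hab : a ≠ b) (c : Bool) (q : List Bool) :
    splitGF a (b :: c :: q) = X ^ 2 * jointGF 0 1 a (b :: c :: q) := by
  rw [sq, mul_assoc, ← jointGF_one_one_cons_of_ne hab]
  apply wordGF_eq_X_mul hab
  · simp [occ_cons_nil]
  · intro w
    have := occ_pos_of_occ_cons_pos (a := a) (q := b :: c :: q) (w := w)
    simp only [occ_cons_self, occ_cons_of_ne hab.symm]
    omega
  · intro w
    have := two_lt_occ_add_occ_of_occ_cons_cons_cons_pos (a := a) (b := b) (c := c) (q := q)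
      (w := w)
    simp only [occ_cons_self, occ_cons_of_ne hab]
    omega

end SplitGF

section Weights

/-- The generating function of the words with three occurrences of `p` that arise by changing a
fixed run of `p` of size `m`, neither the first nor the last one, relative to the generating
function of the words with one occurrence of `p`. -/
noncomputable def innerRunWeight : ℕ → ℤ⟦X⟧
  | 1 => X ^ 2
  | 2 => X * (1 - X)
  | _ => 0

/-- The counterpart of `innerRunWeight` for the first or last run of `p`. -/
noncomputable def endRunWeight : ℕ → ℤ⟦X⟧
  | 1 => X ^ 2
  | 2 => X
  | _ => 0

/-- The sum of the weights of the runs of `p` when another run precedes them, so that only the last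
one is at the boundary. An inner run of size 2 has weight `X - X ^ 2`, one at the boundary `X`. -/
noncomputable def laterRunsWeight (p : List Bool) : ℤ⟦X⟧ :=
  numRunsOfSize p 1 • X ^ 2 + numRunsOfSize p 2 • (X * (1 - X)) +
    (if (runLengths p).getLast? = some 2 then 1 else 0 : ℕ) • X ^ 2

variable {a b : Bool} {q : List Bool}

theorem laterRunsWeight_nil : laterRunsWeight [] = 0 := by
  simp [laterRunsWeight, numRunsOfSize, runLengths, runs]

theorem innerRunWeight_eq (m : ℕ) : innerRunWeight m =
    (if m = 1 then 1 else 0 : ℕ) • X ^ 2 + (if m = 2 then 1 else 0 : ℕ) • (X * (1 - X)) := by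
  rcases m with _ | _ | _ | m <;> simp [innerRunWeight]

theorem endRunWeight_eq (m : ℕ) :
    endRunWeight m = innerRunWeight m + (if m = 2 then 1 else 0 : ℕ) • X ^ 2 := by
  rcases m with _ | _ | _ | m <;> simp [endRunWeight, innerRunWeight]
  ring

theorem laterRunsWeight_replicate_append (m : ℕ) (hq : q.head? ≠ some a) :
    laterRunsWeight (List.replicate (m + 1) a ++ q) = laterRunsWeight q +
      if q = [] then endRunWeight (m + 1) else innerRunWeight (m + 1) := by
  rw [laterRunsWeight, laterRunsWeight, numRunsOfSize_replicate_append m 1 hq,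
    numRunsOfSize_replicate_append m 2 hq, runLengths_replicate_append m hq, List.getLast?_cons,
    add_smul, add_smul, endRunWeight_eq, innerRunWeight_eq]
  by_cases hnil : q = []
  · rw [if_pos hnil, runLengths_eq_nil.2 hnil]
    simp only [List.getLast?_nil, Option.getD_none, Option.some.injEq, reduceCtorEq, if_false,
      zero_smul]
    abel
  · obtain ⟨k, hk⟩ := Option.ne_none_iff_exists'.1
      (List.getLast?_eq_none_iff.not.2 (runLengths_eq_nil.not.2 hnil))
    rw [if_neg hnil, hk, Option.getD_some]
    abel

theorem endRunWeight_add_laterRunsWeight (m : ℕ) (hq : q.head? ≠ some a) :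
    endRunWeight (m + 1) + laterRunsWeight q =
      numRunsOfSize (List.replicate (m + 1) a ++ q) 1 • X ^ 2 +
      numRunsOfSize (List.replicate (m + 1) a ++ q) 2 • (X * (1 - X)) +
      numBoundaryRunsOfSize (List.replicate (m + 1) a ++ q) 2 • X ^ 2 := by
  rw [laterRunsWeight, numRunsOfSize_replicate_append m 1 hq,
    numRunsOfSize_replicate_append m 2 hq, numBoundaryRunsOfSize_replicate_append m 2 hq,
    add_smul, add_smul, add_smul, endRunWeight_eq, innerRunWeight_eq]
  abel

theorem splitGFAfter_replicate_append (hab : a ≠ b) (m : ℕ) (hq : q.head? ≠ some b) :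
    splitGFAfter a b (List.replicate m b ++ q) = jointGF 0 1 b (List.replicate m b ++ q) *
      if q = [] then endRunWeight (m + 1) else innerRunWeight (m + 1) := by
  rcases m with _ | _ | m
  · rw [List.replicate_zero, List.nil_append, splitGFAfter_of_head?_ne hab hq]
    simp only [endRunWeight, innerRunWeight, ite_self]
    ring
  · rw [List.replicate_one, List.singleton_append, splitGFAfter_cons_self hab,
      jointGF_zero_cons_self one_ne_zero]
    rcases q with _ | ⟨c, q⟩
    · rw [jointGF_one_one_nil, jointGF_zero_one_nil, if_pos rfl, endRunWeight]
      ring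
    · have hbc : b ≠ c := fun h => hq (congrArg some h.symm)
      rw [jointGF_one_one_cons_of_ne hbc, if_neg (List.cons_ne_nil c q), innerRunWeight]
      linear_combination -X ^ 2 * jointGF 0 1 b (c :: q) * geomSeries_mul_one_sub
  · rw [List.replicate_succ, List.cons_append, splitGFAfter_cons_self hab, List.replicate_succ,
      List.cons_append, jointGF_one_one_cons_self]
    simp only [endRunWeight, innerRunWeight, ite_self, mul_zero]

theorem splitGF_replicate_append (m : ℕ) (hq : q.head? ≠ some a) (hlen : 2 ≤ m + q.length) :
    splitGF a (List.replicate m a ++ q) =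
      jointGF 0 1 a (List.replicate m a ++ q) * endRunWeight (m + 1) := by
  rcases m with _ | _ | m
  · obtain ⟨b, c, q, rfl⟩ : ∃ b c q', q = b :: c :: q' := by
      rcases q with _ | ⟨b, _ | ⟨c, q⟩⟩ <;> simp_all
    rw [List.replicate_zero, List.nil_append, splitGF_cons_cons_of_ne (by simpa using hq.symm),
      endRunWeight, mul_comm]
  · obtain ⟨b, q, rfl⟩ := List.exists_cons_of_ne_nil (l := q) (by rintro rfl; simp at hlen)
    have hab : a ≠ b := fun h => hq (congrArg some h.symm)
    rw [List.replicate_one, List.singleton_append, splitGF_cons_self,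
      jointGF_one_one_cons_of_ne hab, jointGF_zero_cons_self one_ne_zero, endRunWeight]
    ring
  · rw [List.replicate_succ, List.cons_append, splitGF_cons_self, List.replicate_succ,
      List.cons_append, jointGF_one_one_cons_self]
    simp only [endRunWeight, mul_zero]

theorem jointGF_zero_one_eq (hq : q.head? ≠ some a) :
    jointGF 0 1 a q = X ^ q.length * geomSeries ^ (q.length - numRuns q + 1) := by
  induction q using run_induction generalizing a with
  | nil => simp [jointGF_zero_one_nil]
  | replicate_append b m q hq' ih =>
    have hab : a ≠ b := fun h => hq (by simp [h, List.replicate_succ])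
    have hle := (Nat.le_add_right _ _).trans (numRuns_add_numRunsOfSize_two_le q)
    have hexp : m + 1 + q.length - (numRuns q + 1) + 1 = m + (q.length - numRuns q + 1) := by omega
    rw [numRuns_replicate_append m hq', List.length_append, List.length_replicate, hexp,
      List.replicate_succ, List.cons_append, jointGF_zero_one_cons_of_ne hab,
      jointGF_zero_replicate_append one_ne_zero, ih hq']
    ring

theorem jointGF_zero_three_eq (hq : q.head? ≠ some a) :
    jointGF 0 3 a q = jointGF 0 1 a q * laterRunsWeight q := by
  induction q using run_induction generalizing a with
  | nil => rw [jointGF_nil_of_ne_one (by decide), laterRunsWeight_nil, mul_zero]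
  | replicate_append b m q hq' ih =>
    have hab : a ≠ b := fun h => hq (by simp [h, List.replicate_succ])
    rw [laterRunsWeight_replicate_append m hq', List.replicate_succ, List.cons_append,
      jointGF_zero_three_cons_of_ne hab, jointGF_zero_one_cons_of_ne hab,
      splitGFAfter_replicate_append hab m hq', jointGF_zero_replicate_append three_ne_zero,
      ih hq', jointGF_zero_replicate_append one_ne_zero]
    ring

end Weights

section OccGF

variable {a b : Bool} {p : List Bool}

/-- The generating function of the words with `k` occurrences of `p`. -/
noncomputable def occGF (k : ℕ) (p : List Bool) : ℤ⟦X⟧ := wordGF fun w => occ p w = k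

theorem coeff_occGF (n k : ℕ) (p : List Bool) : coeff n (occGF k p) = (B n p k : ℤ) := by
  rw [occGF, wordGF, coeff_mk, B]

theorem occGF_cons {k : ℕ} (hk : k ≠ 0) (a : Bool) (q : List Bool) :
    occGF k (a :: q) = X * geomSeries * wordGF fun w => occ (a :: q) w + occ q w = k := by
  obtain ⟨b, hba⟩ := exists_ne a
  apply wordGF_eq_X_mul_geomSeries_mul hba.symm
  · simpa [occ_cons_nil] using hk.symm
  · intro w
    rw [occ_cons_self]
  · intro w
    rw [occ_cons_of_ne hba.symm]

theorem occGF_one_cons (a : Bool) (q : List Bool) :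
    occGF 1 (a :: q) = X * geomSeries * jointGF 0 1 a q := by
  rw [occGF_cons one_ne_zero, jointGF]
  congr 1
  refine wordGF_congr fun w => ?_
  have := occ_pos_of_occ_cons_pos (a := a) (q := q) (w := w)
  omega

theorem occGF_three_cons (a : Bool) (q : List Bool) :
    occGF 3 (a :: q) = X * geomSeries * (jointGF 0 3 a q + splitGF a q) := by
  rw [occGF_cons three_ne_zero]
  congr 1
  refine wordGF_eq_add (fun w => ?_) fun w => ?_ <;> omega

theorem occGF_one (hp : p ≠ []) :
    occGF 1 p = X ^ p.length * geomSeries ^ (p.length - numRuns p + 2) := by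
  cases p using run_induction with
  | nil => exact absurd rfl hp
  | replicate_append a m q hq _ =>
    have hle := (Nat.le_add_right _ _).trans (numRuns_add_numRunsOfSize_two_le q)
    have hexp : m + 1 + q.length - (numRuns q + 1) + 2 =
        m + 1 + (q.length - numRuns q + 1) := by omega
    rw [numRuns_replicate_append m hq, List.length_append, List.length_replicate, hexp,
      List.replicate_succ, List.cons_append, occGF_one_cons,
      jointGF_zero_replicate_append one_ne_zero, jointGF_zero_one_eq hq]
    ring

theorem occGF_three (hp : 3 ≤ p.length) :
    occGF 3 p = occGF 1 p * (numRunsOfSize p 1 • X ^ 2 + numRunsOfSize p 2 • (X * (1 - X)) +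
      numBoundaryRunsOfSize p 2 • X ^ 2) := by
  cases p using run_induction with
  | nil => simp at hp
  | replicate_append a m q hq _ =>
    have hlen : 2 ≤ m + q.length := by
      rw [List.length_append, List.length_replicate] at hp
      omega
    rw [← endRunWeight_add_laterRunsWeight m hq, List.replicate_succ, List.cons_append,
      occGF_three_cons, occGF_one_cons, splitGF_replicate_append m hq hlen,
      jointGF_zero_replicate_append three_ne_zero, jointGF_zero_three_eq hq,
      jointGF_zero_replicate_append one_ne_zero]
    ring

theorem occGF_three_eq_nsmul (hp : 3 ≤ p.length) :
    occGF 3 p =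
      numRunsOfSize p 1 • (X ^ (p.length + 2) * geomSeries ^ (p.length - numRuns p + 1 + 1)) +
      (numRunsOfSize p 2 - numBoundaryRunsOfSize p 2) •
        (X ^ (p.length + 1) * geomSeries ^ (p.length - numRuns p + 1)) +
      numBoundaryRunsOfSize p 2 •
        (X ^ (p.length + 1) * geomSeries ^ (p.length - numRuns p + 1 + 1)) := by
  have hnil : p ≠ [] := List.ne_nil_of_length_pos (three_pos.trans_le hp)
  rw [occGF_three hp, occGF_one hnil]
  simp only [nsmul_eq_mul, Nat.cast_sub (numBoundaryRunsOfSize_le_numRunsOfSize hnil 2)]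
  linear_combination (numRunsOfSize p 2 - numBoundaryRunsOfSize p 2 : ℤ⟦X⟧) *
    X ^ (p.length + 1) * geomSeries ^ (p.length - numRuns p + 1) * geomSeries_mul_one_sub

theorem occGF_three_singleton (a : Bool) : occGF 3 [a] = X ^ 3 * geomSeries ^ 4 := by
  rw [occGF_three_cons, jointGF_nil_of_ne_one (by decide), splitGF_nil, jointGF_one_one_nil]
  ring

theorem occGF_three_pair_self (a : Bool) : occGF 3 [a, a] = X ^ 3 * geomSeries ^ 4 := by
  rw [occGF_three_cons, jointGF_zero_cons_self three_ne_zero, jointGF_nil_of_ne_one (by decide),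
    splitGF_cons_self, jointGF_one_one_nil]
  ring

theorem occGF_three_pair_of_ne (hab : a ≠ b) :
    occGF 3 [a, b] = 3 * (X ^ 4 * geomSeries ^ 2) := by
  rw [occGF_three_cons, jointGF_zero_three_cons_of_ne hab, jointGF_nil_of_ne_one (by decide),
    splitGFAfter_of_head?_ne hab (by simp), splitGF_singleton_of_ne hab,
    jointGF_one_one_cons_of_ne hab, jointGF_zero_one_cons_of_ne hab, jointGF_zero_one_nil]
  ring

end OccGF

section Counting

variable {p : List Bool}

theorem B_three_of_three_le_length (hp : 3 ≤ p.length) (n : ℕ) :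
    B n p 3 = numRunsOfSize p 1 * (n - numRuns p - 1).choose (p.length + 1 - numRuns p) +
      (numRunsOfSize p 2 - numBoundaryRunsOfSize p 2) *
        (n - numRuns p - 1).choose (p.length - numRuns p) +
      numBoundaryRunsOfSize p 2 * (n - numRuns p).choose (p.length + 1 - numRuns p) := by
  have htwo := numRuns_add_numRunsOfSize_two_le p
  have hinner : (numRunsOfSize p 2 - numBoundaryRunsOfSize p 2) •
      coeff n (X ^ (p.length + 1) * geomSeries ^ (p.length - numRuns p + 1)) =
      (numRunsOfSize p 2 - numBoundaryRunsOfSize p 2) •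
        ((n - numRuns p - 1).choose (p.length - numRuns p) : ℤ) := by
    rcases Nat.eq_zero_or_pos (numRunsOfSize p 2 - numBoundaryRunsOfSize p 2) with h0 | hpos
    · rw [h0, zero_smul, zero_smul]
    · rw [coeff_X_pow_mul_geomSeries_pow (.inl (by omega)),
        show n + (p.length - numRuns p) - (p.length + 1) = n - numRuns p - 1 by omega]
  zify
  rw [← coeff_occGF, occGF_three_eq_nsmul hp, map_add, map_add, map_nsmul, map_nsmul, map_nsmul,
    hinner, coeff_X_pow_mul_geomSeries_pow (.inl (Nat.succ_ne_zero _)),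
    coeff_X_pow_mul_geomSeries_pow (.inl (Nat.succ_ne_zero _)),
    show n + (p.length - numRuns p + 1) - (p.length + 2) = n - numRuns p - 1 by omega,
    show n + (p.length - numRuns p + 1) - (p.length + 1) = n - numRuns p by omega,
    show p.length + 1 - numRuns p = p.length - numRuns p + 1 by omega]
  simp only [nsmul_eq_mul]

theorem exists_pair_of_numRuns_eq_two (hp : p.length < 3) (hr : numRuns p = 2) :
    ∃ a b, a ≠ b ∧ p = [a, b] := by
  rcases p with _ | ⟨a, _ | ⟨b, _ | ⟨c, q⟩⟩⟩
  · simp [numRuns, runs] at hr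
  · revert hr; cases a <;> decide
  · refine ⟨a, b, ?_, rfl⟩
    revert hr; cases a <;> cases b <;> decide
  · simp only [List.length_cons] at hp
    omega

theorem exists_eq_of_numRuns_eq_one (hp : p.length < 3) (hr : numRuns p = 1) :
    ∃ a, p = [a] ∨ p = [a, a] := by
  rcases p with _ | ⟨a, _ | ⟨b, _ | ⟨c, q⟩⟩⟩
  · simp [numRuns, runs] at hr
  · exact ⟨a, .inl rfl⟩
  · refine ⟨a, .inr ?_⟩
    revert hr; cases a <;> cases b <;> decide
  · simp only [List.length_cons] at hp
    omega

theorem B_three_of_numRuns_eq_one (hp : p.length < 3) (hr : numRuns p = 1) (n : ℕ) :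
    B n p 3 = n.choose 3 := by
  zify
  rw [← coeff_occGF]
  have hgf : occGF 3 p = X ^ 3 * geomSeries ^ 4 := by
    obtain ⟨a, rfl | rfl⟩ := exists_eq_of_numRuns_eq_one hp hr
    · exact occGF_three_singleton a
    · exact occGF_three_pair_self a
  rw [hgf, coeff_X_pow_mul_geomSeries_pow (.inl three_ne_zero), Nat.add_sub_cancel]

theorem B_three_of_numRuns_eq_two (hp : p.length < 3) (hr : numRuns p = 2) (n : ℕ) :
    B n p 3 = 3 * (n - 3) := by
  obtain ⟨a, b, hab, rfl⟩ := exists_pair_of_numRuns_eq_two hp hr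
  have hcoeff : coeff n (X ^ 4 * geomSeries ^ 2) = ((n - 3 : ℕ) : ℤ) := by
    rw [coeff_X_pow_mul_geomSeries_pow (.inl one_ne_zero), Nat.choose_one_right]
    rfl
  have hgf : occGF 3 [a, b] = 3 • (X ^ 4 * geomSeries ^ 2) := by
    rw [occGF_three_pair_of_ne hab, nsmul_eq_mul, Nat.cast_ofNat]
  rw [← Nat.cast_inj (R := ℤ), ← coeff_occGF, hgf, map_nsmul, hcoeff, nsmul_eq_mul, Nat.cast_mul]

end Counting

theorem B_three_eq (p : List Bool) (l r r₁ r₂ r2b : ℕ) (hl : p.length = l)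
    (hr : numRuns p = r) (hr₁ : numRunsOfSize p 1 = r₁) (hr₂ : numRunsOfSize p 2 = r₂)
    (hr2b : numBoundaryRunsOfSize p 2 = r2b) (n : ℕ) (hn : 3 ≤ n) :
    (3 ≤ l → B n p 3 = r₁ * (n - r - 1).choose (l + 1 - r)
        + (r₂ - r2b) * (n - r - 1).choose (l - r)
        + r2b * (n - r).choose (l + 1 - r)) ∧
    (l < 3 →
      (r = 1 → B n p 3 = n.choose 3) ∧
      (r = 2 → B n p 3 = 3 * (n - 3))) := by
  subst hl hr hr₁ hr₂ hr2b
  exact ⟨fun hp => B_three_of_three_le_length hp n, fun hp =>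
    ⟨fun hr => B_three_of_numRuns_eq_one hp hr n, fun hr => B_three_of_numRuns_eq_two hp hr n⟩⟩
end

section
/- Let p be a binary word of length l with r runs, r_i of which are of size i; let r_{3,b} be the number of runs of p of size 3 that are the first or last run; and let r_{(1,2),b} be 2 if the first two runs of both p and its reverse p^r have sizes 1 and 2 respectively, 1 if this holds for exactly one of p or p^r, and 0 otherwise. For any n ≥ 5: if l ≥ 4, then B_{n,p}(4) = r_1 · binomial(n − r − 2, l − r + 1) + binomial(r_1, 2) · binomial(n − r − 1, l − r + 1) + (r_3 − r_{3,b}) · binomial(n − r − 1, l − r) + r_{3,b} · binomial(n − r, l − r + 1) + r_{(1,2),b} · binomial(n − r − 2, l − r); otherwise, B_{n,p}(4) = 0 if l = 2 and r = 1; binomial(n, 4) if l = 1 or l = 3 with r = 1; (n − 4)^2 if l = 3 and r = 2; 5n − 19 if l = 2 and r = 2; and 7n − 31 if l = 3 and r = 3. -/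
/-- `r12b p` is `2` if the first two runs of both `p` and its reverse have sizes `1` and `2`
respectively, `1` if this holds for exactly one of them, and `0` otherwise. -/
def r12b (p : List Bool) : ℕ :=
  (if ((runs p).map List.length).take 2 = [1, 2] then 1 else 0) +
  (if ((runs p.reverse).map List.length).take 2 = [1, 2] then 1 else 0)

/-
Read a word letter by letter. After any prefix, the number of occurrences of `p` is a weighted sum
of the numbers of occurrences of the suffixes of `p` in the rest of the word: reading a letter `c`
adds the weight of each suffix that begins with `c` to the weight of the next shorter one. A word
containing `p` contains all suffixes of `p`, so no word with four occurrences is left once the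
weights add up to more than four, and few lists of weights survive. The generating functions by
length of the words that remain to be read satisfy linear equations, in which the pattern loses its
first letter as soon as a position of that letter is fixed; fixing the last one that extends to an
occurrence of the pattern makes this choice unique.

Among the words with one occurrence, a run of size `s` accounts for `X ^ s / (1 - X) ^ (s - 1)`,
because letters of the other kind fit in its `s - 1` gaps. Four occurrences arise in few ways: a run
of size one with three further letters, two runs of size one with a further letter each, a run of
size three with one further letter (`4.choose 3 = 4`), or an end of the pattern whose runs have
sizes one and two. Each contributes a term to the ratio of the two generating functions. An interior
run of size three contributes less than one at an end: among the three gaps of its four letters,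
those next to a neighbouring run have to stay empty, as a letter there would extend that run.
-/

namespace BinaryWord

open PowerSeries

theorem occ_nil_left (w : List Bool) : occ [] w = 1 := by
  rw [occ, (List.sublists_perm_sublists' w).count_eq]
  induction w with
  | nil => rfl
  | cons c w ih => rw [List.sublists'_cons, List.count_append, ih, List.count_eq_zero_of_not_mem
      (by simp)]

theorem occ_cons_nil (x : Bool) (q : List Bool) : occ (x :: q) [] = 0 := by
  simp [occ]

theorem occ_cons_cons (x c : Bool) (q w : List Bool) :
    occ (x :: q) (c :: w) = occ (x :: q) w + if c = x then occ q w else 0 := by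
  simp only [occ, fun v : List Bool => (List.sublists_perm_sublists' v).count_eq,
    List.sublists'_cons, List.count_append]
  split_ifs with h
  · rw [h, List.count_map_of_injective _ _ List.cons_injective]
  · congr 1
    exact List.count_eq_zero_of_not_mem (by simp [h])

theorem occ_pos_of_occ_cons_pos {x : Bool} {q w : List Bool} (h : 0 < occ (x :: q) w) :
    0 < occ q w := by
  induction w generalizing q x with
  | nil => simp [occ_cons_nil] at h
  | cons c w ih =>
    cases q with
    | nil => simp [occ_nil_left]
    | cons y q =>
      rw [occ_cons_cons] at h ⊢
      by_cases h' : 0 < occ (x :: y :: q) w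
      · exact Nat.add_pos_left (ih h') _
      · split_ifs at h <;> omega

theorem two_le_occ_of_occ_cons_cons_pos {x : Bool} {q w : List Bool}
    (h : 0 < occ (x :: x :: q) w) : 2 ≤ occ (x :: q) w := by
  induction w with
  | nil => simp [occ_cons_nil] at h
  | cons c w ih =>
    rw [occ_cons_cons] at h ⊢
    by_cases h' : 0 < occ (x :: x :: q) w
    · exact le_add_right (ih h')
    · have hc : c = x := by by_contra hc; simp [hc] at h; omega
      have hpos : 0 < occ (x :: q) w := by simpa [hc, h'] using h
      have := occ_pos_of_occ_cons_pos hpos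
      simp only [hc, if_true]
      omega

theorem occ_cons_eq_zero (x : Bool) {q w : List Bool} (h : occ q w = 0) : occ (x :: q) w = 0 := by
  by_contra h'
  exact (occ_pos_of_occ_cons_pos (Nat.pos_of_ne_zero h')).ne' h

theorem occ_replicate (s : ℕ) (x : Bool) (w : List Bool) :
    occ (List.replicate s x) w = (w.count x).choose s := by
  induction w generalizing s with
  | nil => cases s <;> simp [occ_nil_left, occ_cons_nil, List.replicate_succ]
  | cons c w ih =>
    cases s with
    | zero => simp [occ_nil_left]
    | succ s =>
      rw [List.replicate_succ, occ_cons_cons, ← List.replicate_succ, ih, ih, List.count_cons]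
      by_cases h : c = x <;> simp [h, Nat.choose_succ_succ', add_comm]

/-! ### Generating functions by length -/

/-- The generating function by length of a set of words over a finite alphabet. -/
noncomputable def lengthGF {α : Type*} (L : Set (List α)) : ℤ⟦X⟧ :=
  PowerSeries.mk fun n => ({w ∈ L | w.length = n}.ncard : ℤ)

section LengthGF

variable {α : Type*}

theorem lengthGF_empty : lengthGF (∅ : Set (List α)) = 0 := by
  ext n
  simp [lengthGF]

theorem lengthGF_union [Finite α] {L M : Set (List α)} (h : Disjoint L M) :
    lengthGF (L ∪ M) = lengthGF L + lengthGF M := by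
  ext n
  have hfin (K : Set (List α)) : {w ∈ K | w.length = n}.Finite :=
    (List.finite_length_eq α n).subset fun _ hw => hw.2
  have hdisj : Disjoint {w ∈ L | w.length = n} {w ∈ M | w.length = n} :=
    h.mono (Set.sep_subset _ _) (Set.sep_subset _ _)
  simp only [lengthGF, map_add, coeff_mk]
  rw [← Nat.cast_add, ← Set.ncard_union_eq hdisj (hfin L) (hfin M)]
  exact congrArg (fun K : Set (List α) => (K.ncard : ℤ)) Set.sep_union

theorem coeff_zero_lengthGF (L : Set (List α)) [Decidable ([] ∈ L)] :
    coeff 0 (lengthGF L) = if [] ∈ L then 1 else 0 := by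
  have hL : {w ∈ L | w.length = 0} = if [] ∈ L then {[]} else ∅ := by
    ext w
    split_ifs with h <;> simp only [Set.mem_sep_iff, List.length_eq_zero_iff] <;> aesop
  rw [lengthGF, coeff_mk, hL]
  split_ifs <;> simp

theorem coeff_succ_lengthGF [Fintype α] (L : Set (List α)) (n : ℕ) :
    coeff (n + 1) (lengthGF L) = ∑ c, coeff n (lengthGF {w | c :: w ∈ L}) := by
  have hL : {w ∈ L | w.length = n + 1} =
      ⋃ c, List.cons c '' {w ∈ {w | c :: w ∈ L} | w.length = n} := by
    ext w
    cases w <;> simp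
  have hfin (c : α) : (List.cons c '' {w ∈ {w | c :: w ∈ L} | w.length = n}).Finite :=
    ((List.finite_length_eq α n).subset fun _ hw => hw.2).image _
  have hdisj : Pairwise (Function.onFun Disjoint
      fun c => List.cons c '' {w ∈ {w | c :: w ∈ L} | w.length = n}) := by
    intro c d hcd
    rw [Function.onFun, Set.disjoint_left]
    rintro _ ⟨v, _, rfl⟩ ⟨w, _, h⟩
    exact hcd (List.cons.inj h).1.symm
  simp only [lengthGF, coeff_mk]
  rw [hL, Set.ncard_iUnion_of_finite hfin hdisj, finsum_eq_sum_of_fintype, Nat.cast_sum]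
  simp only [Set.ncard_image_of_injective _ List.cons_injective]

open Classical in
theorem lengthGF_eq_add_X_mul_sum [Fintype α] (L : Set (List α)) :
    lengthGF L = (if [] ∈ L then 1 else 0) + X * ∑ c, lengthGF {w | c :: w ∈ L} := by
  ext n
  cases n with
  | zero => rw [coeff_zero_lengthGF]; split_ifs <;> simp
  | succ n => rw [coeff_succ_lengthGF]; split_ifs <;> simp [coeff_succ_X_mul, coeff_one]

end LengthGF

theorem lengthGF_eq_X_mul (x : Bool) {L : Set (List Bool)} (h : [] ∉ L) :
    lengthGF L = X * (lengthGF {w | (!x) :: w ∈ L} + lengthGF {w | x :: w ∈ L}) := by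
  rw [lengthGF_eq_add_X_mul_sum, if_neg h, zero_add, Fintype.sum_bool]
  cases x
  · rfl
  · rw [add_comm]; rfl

theorem B_eq_coeff_lengthGF (n : ℕ) (p : List Bool) (k : ℕ) :
    (B n p k : ℤ) = coeff n (lengthGF {w | occ p w = k}) := by
  rw [B, lengthGF, coeff_mk, ← Nat.card_coe_set_eq]
  simp only [Set.mem_ofPred_eq, and_comm]
  rfl

/-- The geometric series `1 / (1 - X)`. -/
noncomputable def geom : ℤ⟦X⟧ := PowerSeries.mk 1

theorem geom_mul_one_sub_X : geom * (1 - X) = 1 :=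
  mk_one_mul_one_sub_eq_one ℤ

theorem eq_geom_mul_of_eq_add_X_mul {T R : ℤ⟦X⟧} (h : T = R + X * T) : T = geom * R := by
  linear_combination geom * h - T * geom_mul_one_sub_X

theorem eq_geom_mul_of_eq_X_mul_add {T R : ℤ⟦X⟧} (h : T = X * (T + R)) : T = geom * X * R := by
  linear_combination geom * h - T * geom_mul_one_sub_X

theorem coeff_X_pow_mul_geom_pow {j m : ℕ} (n : ℕ) (hm : m ≠ 0) :
    coeff n (X ^ j * geom ^ (m + 1)) = ((n + m - j).choose m : ℤ) := by
  rw [coeff_X_pow_mul', geom, mk_one_pow_eq_mk_choose_add]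
  split_ifs with h
  · rw [coeff_mk]; congr 2; omega
  · rw [Nat.choose_eq_zero_of_lt (by omega), Nat.cast_zero]

theorem lengthGF_count_eq (x : Bool) (m : ℕ) :
    lengthGF {w : List Bool | w.count x = m} = X ^ m * geom ^ (m + 1) := by
  induction m with
  | zero =>
    rw [pow_zero, one_mul, zero_add, pow_one, ← mul_one geom]
    apply eq_geom_mul_of_eq_add_X_mul
    conv_lhs => rw [lengthGF_eq_add_X_mul_sum]
    cases x <;> simp [lengthGF_empty]
  | succ m ih =>
    have hrec : lengthGF {w : List Bool | w.count x = m + 1} =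
        geom * X * lengthGF {w : List Bool | w.count x = m} := by
      apply eq_geom_mul_of_eq_X_mul_add
      conv_lhs => rw [lengthGF_eq_X_mul x (by simp)]
      simp
    rw [hrec, ih]
    ring

/-! ### Weights of suffixes -/

/-- The weighted number of occurrences `∑ i, aᵢ * occ (q.drop i) w` of the suffixes of `q`, where
`a` is a finite list of weights, completed by zeros. -/
def weightedOcc : List ℕ → List Bool → List Bool → ℕ
  | [], _, _ => 0
  | a :: as, q, w => a * occ q w + weightedOcc as q.tail w

/-- The weights of the suffixes of `q` after a letter `c` has been read: by `occ_cons_cons`, each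
suffix beginning with `c` hands a copy of its weight on to the next suffix. The argument before the
weights is what the first suffix receives from its predecessor. -/
def advance (c : Bool) : ℕ → List ℕ → List Bool → List ℕ
  | carry, [], _ => if carry = 0 then [] else [carry]
  | carry, a :: as, [] => (a + carry) :: as
  | carry, a :: as, x :: q => (a + carry) :: advance c (if c = x then a else 0) as q

theorem weightedOcc_singleton (a : ℕ) (q w : List Bool) : weightedOcc [a] q w = a * occ q w := by
  simp [weightedOcc]

theorem weightedOcc_nil_cons (as : List ℕ) (c : Bool) (w : List Bool) :
    weightedOcc as [] (c :: w) = weightedOcc as [] w := by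
  induction as with
  | nil => rfl
  | cons a as ih => simp [weightedOcc, occ_nil_left, ih]

theorem weightedOcc_advance (c : Bool) (carry : ℕ) (a : List ℕ) (q w : List Bool) :
    weightedOcc (advance c carry a q) q w = carry * occ q w + weightedOcc a q (c :: w) := by
  induction a generalizing carry q with
  | nil => by_cases h : carry = 0 <;> simp [advance, weightedOcc, h]
  | cons a as ih =>
    cases q with
    | nil =>
      simp only [advance, weightedOcc, occ_nil_left, List.tail_nil, weightedOcc_nil_cons]
      ring
    | cons x q =>
      simp only [advance, weightedOcc, List.tail_cons, ih, occ_cons_cons]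
      split_ifs <;> ring

theorem sum_le_weightedOcc (a : List ℕ) {q w : List Bool} (h : 0 < occ q w) :
    a.sum ≤ weightedOcc a q w := by
  induction a generalizing q with
  | nil => exact le_rfl
  | cons a as ih =>
    have htail : 0 < occ q.tail w := by
      cases q with
      | nil => exact h
      | cons x q => exact occ_pos_of_occ_cons_pos h
    rw [List.sum_cons, weightedOcc]
    exact add_le_add (Nat.le_mul_of_pos_right _ h) (ih htail)

theorem weightedOcc_tail {x : Bool} {q w : List Bool} (a : List ℕ) (h : occ (x :: q) w = 0) :
    weightedOcc a (x :: q) w = weightedOcc a.tail q w := by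
  cases a <;> simp [weightedOcc, h]

/-- The words that remain to be read once the last letter of a proper prefix of the pattern has been
read: `q` is the rest of the pattern, and the occurrences of its suffixes, with multiplicities `a`,
have to add up to `k`. The guard `g` is the last letter matched, if any; of its possible
positions the last one has been chosen, so that no occurrence of `g` followed by `q` remains. -/
def states (g : Option Bool) (q : List Bool) (a : List ℕ) (k : ℕ) : Set (List Bool) :=
  {w | (∀ y ∈ g, occ (y :: q) w = 0) ∧ 0 < occ q w ∧ weightedOcc a q w = k}

/-- The generating function by length of `states g q a k`. -/
noncomputable def stateGF (g : Option Bool) (q : List Bool) (a : List ℕ) (k : ℕ) : ℤ⟦X⟧ :=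
  lengthGF (states g q a k)

theorem nil_notMem_states (g : Option Bool) (x : Bool) (q : List Bool) (a : List ℕ) (k : ℕ) :
    [] ∉ states g (x :: q) a k := by
  simp [states, occ_cons_nil]

theorem preimage_not_cons_states (g : Option Bool) (x : Bool) (q : List Bool) (a : List ℕ)
    (k : ℕ) :
    {w | (!x) :: w ∈ states g (x :: q) a k} =
      if g = some (!x) then ∅ else states g (x :: q) (advance (!x) 0 a (x :: q)) k := by
  have hx : (!x) ≠ x := Bool.not_ne_self x
  ext w
  rcases g with _ | y
  · simp [states, weightedOcc_advance, occ_cons_cons, hx]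
  · by_cases hy : y = !x
    · simp only [states, occ_cons_cons, hy, if_true, Option.mem_some_iff, forall_eq',
        Set.mem_ofPred_eq, Set.mem_empty_iff_false, if_neg hx, iff_false]
      omega
    · simp [states, weightedOcc_advance, occ_cons_cons, hx, Ne.symm hy, hy]

theorem preimage_cons_states (g : Option Bool) (x : Bool) (q : List Bool) (a : List ℕ) (k : ℕ) :
    {w | x :: w ∈ states g (x :: q) a k} =
      states (some x) q (advance x 0 a (x :: q)).tail k ∪
        if g = some x then ∅ else states g (x :: q) (advance x 0 a (x :: q)) k := by
  have hadv (w : List Bool) : weightedOcc a (x :: q) (x :: w) =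
      weightedOcc (advance x 0 a (x :: q)) (x :: q) w := by simp [weightedOcc_advance]
  ext w
  by_cases hq : occ (x :: q) w = 0
  · have hguard (y : Bool) : occ (y :: x :: q) (x :: w) = 0 := by
      rw [occ_cons_cons, occ_cons_eq_zero y hq, hq, ite_self]
    split_ifs <;>
      simp [states, hadv, hguard, occ_cons_cons x, hq, weightedOcc_tail _ hq]
  · rcases g with _ | y
    · simp [states, hadv, occ_cons_cons, hq, Nat.pos_of_ne_zero]
    · by_cases hy : y = x
      · simp [states, hadv, occ_cons_cons, hq, hy]
      · simp [states, hadv, occ_cons_cons, hq, hy, Nat.pos_of_ne_zero, Ne.symm hy]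

theorem stateGF_cons (g : Option Bool) (x : Bool) (q : List Bool) (a : List ℕ) (k : ℕ) :
    stateGF g (x :: q) a k =
      X * ((if g = some (!x) then 0 else stateGF g (x :: q) (advance (!x) 0 a (x :: q)) k) +
        (stateGF (some x) q (advance x 0 a (x :: q)).tail k +
          if g = some x then 0 else stateGF g (x :: q) (advance x 0 a (x :: q)) k)) := by
  have hdisj : Disjoint (states (some x) q (advance x 0 a (x :: q)).tail k)
      (if g = some x then ∅ else states g (x :: q) (advance x 0 a (x :: q)) k) := by
    rw [Set.disjoint_left]
    rintro w ⟨hw, -⟩ hw'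
    split_ifs at hw' with hg
    · exact hw'
    · exact hw'.2.1.ne' (hw x rfl)
  rw [stateGF, lengthGF_eq_X_mul x (nil_notMem_states g x q a k), preimage_not_cons_states,
    preimage_cons_states, lengthGF_union hdisj]
  simp only [stateGF, apply_ite lengthGF, lengthGF_empty]

theorem stateGF_eq_zero_of_lt {g : Option Bool} {q : List Bool} {a : List ℕ} {k : ℕ}
    (h : k < a.sum) : stateGF g q a k = 0 := by
  have hempty : states g q a k = ∅ := by
    refine Set.eq_empty_of_forall_notMem fun w hw => ?_
    have := sum_le_weightedOcc a hw.2.1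
    have := hw.2.2
    omega
  rw [stateGF, hempty, lengthGF_empty]

theorem stateGF_cons_cons_eq_zero {g : Option Bool} {x : Bool} {q : List Bool} {a b k : ℕ}
    {c : List ℕ} (h : k < a + 2 * b + c.sum) : stateGF g (x :: x :: q) (a :: b :: c) k = 0 := by
  have hempty : states g (x :: x :: q) (a :: b :: c) k = ∅ := by
    refine Set.eq_empty_of_forall_notMem fun w hw => ?_
    have htwo := two_le_occ_of_occ_cons_cons_pos hw.2.1
    have ha := Nat.le_mul_of_pos_right a hw.2.1
    have hb := Nat.mul_le_mul_left b htwo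
    have hc := sum_le_weightedOcc c (occ_pos_of_occ_cons_pos (occ_pos_of_occ_cons_pos hw.2.1))
    have hk := hw.2.2
    simp only [weightedOcc, List.tail_cons] at hk
    omega
  rw [stateGF, hempty, lengthGF_empty]

theorem stateGF_singleton_mul (g : Option Bool) (q : List Bool) {a : ℕ} (m : ℕ) (ha : a ≠ 0) :
    stateGF g q [a] (a * m) = stateGF g q [1] m := by
  simp [stateGF, states, weightedOcc_singleton, ha]

theorem stateGF_singleton_eq_zero {g : Option Bool} {q : List Bool} {a k : ℕ} (h : ¬ a ∣ k) :
    stateGF g q [a] k = 0 := by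
  have hempty : states g q [a] k = ∅ := by
    refine Set.eq_empty_of_forall_notMem fun w hw => h ?_
    exact ⟨occ q w, by rw [← hw.2.2, weightedOcc_singleton]⟩
  rw [stateGF, hempty, lengthGF_empty]

theorem stateGF_nil (x : Bool) (k : ℕ) : stateGF (some x) [] [k] k = geom := by
  have hstates : states (some x) [] [k] k = {w | w.count x = 0} := by
    ext w
    have hocc : occ [x] w = w.count x := by simpa using occ_replicate 1 x w
    simp [states, weightedOcc_singleton, occ_nil_left, hocc]
  rw [stateGF, hstates, lengthGF_count_eq, pow_zero, one_mul, zero_add, pow_one]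

theorem stateGF_nil_of_ne (x : Bool) {a k : ℕ} (h : a ≠ k) : stateGF (some x) [] [a] k = 0 := by
  simp [stateGF, states, weightedOcc_singleton, occ_nil_left, h, lengthGF_empty]

theorem stateGF_some_cons (x : Bool) (q : List Bool) (k : ℕ) :
    stateGF (some x) (x :: q) [1] k = geom * X * stateGF (some x) q [1] k := by
  apply eq_geom_mul_of_eq_X_mul_add
  conv_lhs => rw [stateGF_cons]
  simp [advance]

theorem stateGF_some_replicate_append (x : Bool) (s : ℕ) (q : List Bool) (k : ℕ) :
    stateGF (some x) (List.replicate s x ++ q) [1] k =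
      (geom * X) ^ s * stateGF (some x) q [1] k := by
  induction s with
  | zero => simp
  | succ s ih => rw [List.replicate_succ, List.cons_append, stateGF_some_cons, ih]; ring

theorem stateGF_some_not_cons (x : Bool) (q : List Bool) (k : ℕ) :
    stateGF (some !x) (x :: q) [1] k =
      X * (stateGF (some x) q [1] k + stateGF (some !x) (x :: q) [1, 1] k) := by
  rw [stateGF_cons]
  simp [advance]

theorem stateGF_none_cons (x : Bool) (q : List Bool) (k : ℕ) :
    stateGF none (x :: q) [1] k =
      geom * X * (stateGF (some x) q [1] k + stateGF none (x :: q) [1, 1] k) := by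
  apply eq_geom_mul_of_eq_X_mul_add
  conv_lhs => rw [stateGF_cons]
  simp [advance]

theorem stateGF_some_not_cons_eq_sum {x : Bool} {q : List Bool} (hq : q.head? ≠ some x) (k : ℕ) :
    stateGF (some !x) (x :: q) [1] k =
      ∑ a ∈ Finset.range k, X ^ (a + 1) * stateGF (some x) q [a + 1] k := by
  have hadv (a : ℕ) : advance x 0 [1, a] (x :: q) = [1, a + 1] := by
    rcases q with _ | ⟨y, q⟩
    · simp [advance]
    · simp_all [advance, eq_comm]
  have hstep (a : ℕ) : stateGF (some !x) (x :: q) [1, a] k =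
      X * (stateGF (some x) q [a + 1] k + stateGF (some !x) (x :: q) [1, a + 1] k) := by
    rw [stateGF_cons, hadv]
    simp
  have hunroll (m : ℕ) : stateGF (some !x) (x :: q) [1] k =
      ∑ a ∈ Finset.range m, X ^ (a + 1) * stateGF (some x) q [a + 1] k +
        X ^ m * stateGF (some !x) (x :: q) [1, m] k := by
    induction m with
    | zero => simp [stateGF, states, weightedOcc]
    | succ m ih => rw [ih, hstep, Finset.sum_range_succ]; ring
  rw [hunroll k, stateGF_eq_zero_of_lt (by simp : k < [1, k].sum), mul_zero, add_zero]

theorem stateGF_some_not_cons_cons (x : Bool) (q : List Bool) :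
    stateGF (some !x) (x :: x :: q) [1] 4 =
      X * stateGF (some x) (x :: q) [1] 4 + X ^ 2 * stateGF (some x) (x :: q) [2, 1] 4 := by
  have hdead : stateGF (some !x) (x :: x :: q) [1, 2, 1] 4 = 0 :=
    stateGF_cons_cons_eq_zero (by simp)
  have hsnd : stateGF (some !x) (x :: x :: q) [1, 1] 4 =
      X * stateGF (some x) (x :: q) [2, 1] 4 := by
    rw [stateGF_cons]
    simp [advance, hdead]
  rw [stateGF_some_not_cons, hsnd]
  ring

theorem stateGF_none_cons_cons (x : Bool) (q : List Bool) :
    stateGF none (x :: x :: q) [1] 4 =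
      geom * X * (stateGF (some x) (x :: q) [1] 4 +
        geom * X * stateGF (some x) (x :: q) [2, 1] 4) := by
  have hdead : stateGF none (x :: x :: q) [1, 2, 1] 4 = 0 := stateGF_cons_cons_eq_zero (by simp)
  have hsnd : stateGF none (x :: x :: q) [1, 1] 4 =
      geom * X * stateGF (some x) (x :: q) [2, 1] 4 := by
    apply eq_geom_mul_of_eq_X_mul_add
    conv_lhs => rw [stateGF_cons]
    simp [advance, hdead]
  rw [stateGF_none_cons, hsnd]

theorem stateGF_none_cons_not_cons (x : Bool) (q : List Bool) :
    stateGF none (x :: (!x) :: q) [1] 4 =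
      geom * (stateGF (some !x) (x :: (!x) :: q) [1] 4 +
        X ^ 2 * stateGF none (x :: (!x) :: q) [1, 1, 1] 4) := by
  have hstep {g : Option Bool} (hg : g = none ∨ g = some !x) {a : ℕ} (ha : 2 ≤ a) :
      stateGF g (x :: (!x) :: q) [1, a] 4 =
        X * (stateGF (some x) ((!x) :: q) [a + 1] 4 +
          stateGF g (x :: (!x) :: q) [1, a + 1] 4) := by
    have hdead : stateGF g (x :: (!x) :: q) [1, a, a] 4 = 0 :=
      stateGF_eq_zero_of_lt (by simp; omega)
    rw [stateGF_cons]
    rcases hg with rfl | rfl <;> simp [advance, hdead, add_comm, show a ≠ 0 by omega]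
  have hguard : stateGF none (x :: (!x) :: q) [1, 2] 4 =
      stateGF (some !x) (x :: (!x) :: q) [1, 2] 4 := by
    have hdead (g : Option Bool) : stateGF g (x :: (!x) :: q) [1, 4] 4 = 0 :=
      stateGF_eq_zero_of_lt (by simp)
    rw [hstep (.inl rfl) le_rfl, hstep (.inr rfl) le_rfl, hstep (.inl rfl) (Nat.le_succ 2),
      hstep (.inr rfl) (Nat.le_succ 2), hdead, hdead]
  have hnone : stateGF none (x :: (!x) :: q) [1, 1] 4 =
      X * (stateGF none (x :: (!x) :: q) [1, 1, 1] 4 +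
        (stateGF (some x) ((!x) :: q) [2] 4 + stateGF none (x :: (!x) :: q) [1, 2] 4)) := by
    rw [stateGF_cons]
    simp [advance]
  have hsome : stateGF (some !x) (x :: (!x) :: q) [1, 1] 4 =
      X * (stateGF (some x) ((!x) :: q) [2] 4 +
        stateGF (some !x) (x :: (!x) :: q) [1, 2] 4) := by
    rw [stateGF_cons]
    simp [advance]
  rw [stateGF_none_cons, stateGF_some_not_cons, hnone, hsome, hguard]
  ring

theorem stateGF_three_one_singleton (x : Bool) :
    stateGF (some x) [x] [3, 1] 4 = geom * X * geom := by
  apply eq_geom_mul_of_eq_X_mul_add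
  conv_lhs => rw [stateGF_cons]
  simp [advance, stateGF_nil]

theorem stateGF_three_one_cons_not_cons (x : Bool) (q : List Bool) :
    stateGF (some x) (x :: (!x) :: q) [3, 1] 4 = X * stateGF (some x) ((!x) :: q) [1] 1 := by
  have hdead : stateGF (some x) (x :: (!x) :: q) [3, 1, 1] 4 = 0 :=
    stateGF_eq_zero_of_lt (by simp)
  have hfour : stateGF (some x) ((!x) :: q) [4] 4 = stateGF (some x) ((!x) :: q) [1] 1 :=
    stateGF_singleton_mul _ _ 1 four_ne_zero
  rw [stateGF_cons]
  simp [advance, hdead, hfour]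

theorem stateGF_two_one_singleton (x : Bool) : stateGF (some x) [x] [2, 1] 4 = 0 := by
  rw [← mul_zero (geom * X)]
  apply eq_geom_mul_of_eq_X_mul_add
  conv_lhs => rw [stateGF_cons]
  simp [advance, stateGF_nil_of_ne]

theorem stateGF_two_one_cons_cons (x : Bool) (q : List Bool) :
    stateGF (some x) (x :: x :: q) [2, 1] 4 =
      geom * X * stateGF (some x) (x :: q) [3, 1] 4 := by
  apply eq_geom_mul_of_eq_X_mul_add
  conv_lhs => rw [stateGF_cons]
  simp [advance]

theorem stateGF_two_one_cons_not_cons (x : Bool) (q : List Bool) :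
    stateGF (some x) (x :: (!x) :: q) [2, 1] 4 =
      X * stateGF (some x) (x :: (!x) :: q) [2, 1, 1] 4 := by
  have hthree : stateGF (some x) ((!x) :: q) [3] 4 = 0 := stateGF_singleton_eq_zero (by decide)
  rw [stateGF_cons]
  simp [advance, hthree]

theorem stateGF_two_one_pair (x : Bool) :
    stateGF (some x) [x, !x] [2, 1] 4 = X ^ 3 * geom := by
  have hdead : stateGF (some x) [x, !x] [2, 1, 2] 4 = 0 := stateGF_eq_zero_of_lt (by simp)
  have hdead' : stateGF (some x) [!x] [3, 4] 4 = 0 := stateGF_eq_zero_of_lt (by simp)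
  have hthree : stateGF (some x) [!x] [3, 1] 4 = X * geom := by
    rw [stateGF_cons]
    simp [advance, stateGF_nil, hdead']
  rw [stateGF_two_one_cons_not_cons, stateGF_cons]
  simp only [Option.some.injEq, Bool.eq_not_self, ↓reduceIte, advance, add_zero,
    Bool.not_eq_eq_eq_not, Nat.reduceAdd, hdead, List.tail_cons, hthree, zero_add]
  ring

theorem stateGF_two_one_cons_not_cons_cons (x y : Bool) (q : List Bool) :
    stateGF (some x) (x :: (!x) :: y :: q) [2, 1] 4 = 0 := by
  have hdead {a : List ℕ} (h : 4 < a.sum) : stateGF (some x) (x :: (!x) :: y :: q) a 4 = 0 :=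
    stateGF_eq_zero_of_lt h
  rw [stateGF_two_one_cons_not_cons, stateGF_cons]
  obtain rfl | rfl := Bool.eq_or_eq_not y x
  · have hdead' : stateGF (some y) ((!y) :: y :: q) [3, 1, 1] 4 = 0 :=
      stateGF_eq_zero_of_lt (by simp)
    simp [advance, hdead, hdead']
  · have hdead' : stateGF (some x) ((!x) :: (!x) :: q) [3, 1] 4 = 0 :=
      stateGF_cons_cons_eq_zero (by simp)
    simp [advance, hdead, hdead']

/-! ### Run sizes -/

/-- The word whose runs, the first of which consists of the letter `x`, have the given sizes. -/
def ofRuns : Bool → List ℕ → List Bool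
  | _, [] => []
  | x, s :: S => List.replicate s x ++ ofRuns (!x) S

theorem ofRuns_succ_cons (x : Bool) (s : ℕ) (S : List ℕ) :
    ofRuns x ((s + 1) :: S) = x :: (List.replicate s x ++ ofRuns (!x) S) := rfl

theorem head?_ofRuns_not_ne {S : List ℕ} (hS : 0 ∉ S) (x : Bool) :
    (ofRuns (!x) S).head? ≠ some x := by
  rcases S with _ | ⟨_ | s, S⟩
  · simp [ofRuns]
  · simp at hS
  · simp [ofRuns_succ_cons]

/-- The generating function of the words with exactly one occurrence of a pattern with run sizes
`S` and no occurrence of that pattern preceded by the letter opposite to its first one. -/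
noncomputable def uniqueGF : List ℕ → ℤ⟦X⟧
  | [] => geom
  | s :: S => X * (geom * X) ^ (s - 1) * uniqueGF S

theorem stateGF_ofRuns_one {S : List ℕ} (hS : 0 ∉ S) (x : Bool) :
    stateGF (some !x) (ofRuns x S) [1] 1 = uniqueGF S := by
  induction S generalizing x with
  | nil => exact stateGF_nil _ 1
  | cons s S ih =>
    obtain ⟨hs, hS'⟩ := List.ne_and_not_mem_of_not_mem_cons hS
    obtain ⟨s, rfl⟩ := Nat.exists_eq_succ_of_ne_zero hs.symm
    have ih : stateGF (some x) (ofRuns (!x) S) [1] 1 = uniqueGF S := by simpa using ih hS' (!x)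
    rw [ofRuns_succ_cons, stateGF_some_not_cons, stateGF_some_replicate_append, ih,
      stateGF_eq_zero_of_lt (by simp), uniqueGF]
    simp [mul_assoc]

theorem stateGF_ofRuns_two {S : List ℕ} (hS : 0 ∉ S) (x : Bool) :
    stateGF (some !x) (ofRuns x S) [1] 2 = uniqueGF S * (X * (S.count 1 : ℤ⟦X⟧)) := by
  induction S generalizing x with
  | nil => simp [ofRuns, stateGF_nil_of_ne]
  | cons s S ih =>
    obtain ⟨hs, hS'⟩ := List.ne_and_not_mem_of_not_mem_cons hS
    have hone : stateGF (some x) (ofRuns (!x) S) [1] 1 = uniqueGF S := by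
      simpa using stateGF_ofRuns_one hS' (!x)
    have ih : stateGF (some x) (ofRuns (!x) S) [1] 2 = uniqueGF S * (X * (S.count 1 : ℤ⟦X⟧)) := by
      simpa using ih hS' (!x)
    rcases s with _ | _ | s
    · contradiction
    · rw [ofRuns_succ_cons, List.replicate_zero, List.nil_append,
        stateGF_some_not_cons_eq_sum (head?_ofRuns_not_ne hS' x), Finset.sum_range_succ,
        Finset.sum_range_one, stateGF_singleton_mul _ _ 1 (by decide), ih, hone, uniqueGF,
        List.count_cons]
      simp only [zero_add, pow_one, Nat.reduceAdd, tsub_self, pow_zero, mul_one, BEq.rfl,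
        ↓reduceIte, Nat.cast_add, Nat.cast_one]
      ring
    · rw [ofRuns_succ_cons, stateGF_some_not_cons, stateGF_some_replicate_append, ih,
        List.replicate_succ, List.cons_append, stateGF_cons_cons_eq_zero (by simp), uniqueGF,
        List.count_cons]
      simp only [add_zero, add_tsub_cancel_right, Nat.reduceBeqDiff, Bool.false_eq_true,
        ↓reduceIte]
      ring

/-- The factor by which the words with four occurrences of a pattern outnumber those with one. It
has a term for each of the `c` runs of size one, each of the pairs of them, each of the `i` interior
and `b` boundary runs of size three, and each of the `f` ends with run sizes one and two. -/
noncomputable def fourFactor (c i b f : ℕ) : ℤ⟦X⟧ :=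
  (c : ℤ⟦X⟧) * X ^ 3 + (c.choose 2 : ℤ⟦X⟧) * X ^ 2 + (i : ℤ⟦X⟧) * (X * (1 - X)) +
    (b : ℤ⟦X⟧) * X + (f : ℤ⟦X⟧) * (X ^ 2 * (1 - X))

/-- The instance of `fourFactor` for a pattern with run sizes `S` of which the first one is not at
the boundary. -/
noncomputable def interiorFactor (S : List ℕ) : ℤ⟦X⟧ :=
  fourFactor (S.count 1) (S.dropLast.count 3) (if S.getLast? = some 3 then 1 else 0)
    (if [2, 1] <:+ S then 1 else 0)

/-- The summand of `interiorFactor (s :: S)` due to a first run of size `s ≥ 2`. -/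
noncomputable def excessFactor (s : ℕ) (S : List ℕ) : ℤ⟦X⟧ :=
  if s = 3 then (if S = [] then X else X * (1 - X))
  else if s = 2 ∧ S = [1] then X ^ 2 * (1 - X) else 0

theorem interiorFactor_one_cons (S : List ℕ) :
    interiorFactor (1 :: S) = interiorFactor S + (S.count 1 : ℤ⟦X⟧) * X ^ 2 + X ^ 3 := by
  have hchoose : (S.count 1 + 1).choose 2 = S.count 1 + (S.count 1).choose 2 := by
    rw [Nat.choose_succ_succ', Nat.choose_one_right]
  rcases S with _ | ⟨t, S⟩
  · simp [interiorFactor, fourFactor, List.suffix_cons_iff]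
  · simp only [interiorFactor, fourFactor, List.count_cons_self, hchoose, List.dropLast_cons_cons,
      List.getLast?_cons_cons, List.suffix_cons_iff (a := 1)]
    simp only [Nat.cast_add, Nat.cast_one, ne_eq, OfNat.one_ne_ofNat, not_false_eq_true,
      List.count_cons_of_ne, Nat.cast_ite, Nat.cast_zero, ite_mul, one_mul, zero_mul,
      List.cons.injEq, OfNat.ofNat_ne_one, List.nil_eq, false_and, false_or]
    ring

theorem interiorFactor_cons (s : ℕ) (S : List ℕ) :
    interiorFactor ((s + 2) :: S) = interiorFactor S + excessFactor (s + 2) S := by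
  rcases S with _ | ⟨t, S⟩
  · simp [interiorFactor, fourFactor, excessFactor, List.suffix_cons_iff]
  · simp only [interiorFactor, fourFactor, excessFactor, List.dropLast_cons_cons,
      List.getLast?_cons_cons, List.suffix_cons_iff (a := s + 2), List.count_cons (b := s + 2)]
    rcases s with _ | _ | s
    · by_cases h : t = 1 ∧ S = []
      · obtain ⟨rfl, rfl⟩ := h
        simp [List.suffix_cons_iff]
      · simp [h, eq_comm (a := 1)]
    · simp only [zero_add, Nat.reduceAdd, Nat.reduceBEq, Bool.false_eq_true, ↓reduceIte, add_zero,
        BEq.rfl, Nat.cast_add, Nat.cast_one, Nat.cast_ite, Nat.cast_zero, ite_mul, one_mul,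
        zero_mul, List.cons.injEq, Nat.reduceEqDiff, List.nil_eq, false_and, false_or,
        reduceCtorEq]
      ring
    · simp

theorem X_sq_mul_stateGF_two_one {S : List ℕ} (hS : 0 ∉ S) (x : Bool) (s : ℕ) :
    X ^ 2 * stateGF (some x) (x :: (List.replicate s x ++ ofRuns (!x) S)) [2, 1] 4 =
      uniqueGF ((s + 2) :: S) * excessFactor (s + 2) S := by
  have hgeom := geom_mul_one_sub_X
  rcases s with _ | _ | s
  · rcases S with _ | ⟨_ | _ | t, S⟩
    · simp [ofRuns, excessFactor, stateGF_two_one_singleton]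
    · simp at hS
    · rcases S with _ | ⟨_ | t, S⟩
      · simp only [List.replicate_zero, ofRuns, zero_add, List.replicate_one, List.append_nil,
          List.nil_append, stateGF_two_one_pair, uniqueGF, Nat.add_one_sub_one, pow_one, tsub_self,
          pow_zero, mul_one, excessFactor, Nat.reduceEqDiff, ↓reduceIte, and_self]
        linear_combination -geom * X ^ 5 * hgeom
      · simp at hS
      · simp [ofRuns_succ_cons, excessFactor, stateGF_two_one_cons_not_cons_cons]
    · simp [ofRuns_succ_cons, excessFactor, List.replicate_succ,
        stateGF_two_one_cons_not_cons_cons]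
  · rcases S with _ | ⟨_ | t, S⟩
    · simp only [zero_add, List.replicate_one, ofRuns, List.append_nil, stateGF_two_one_cons_cons,
        stateGF_three_one_singleton, uniqueGF, Nat.reduceAdd, Nat.add_one_sub_one, excessFactor,
        ↓reduceIte]
      ring
    · simp at hS
    · have hone := stateGF_ofRuns_one hS (!x)
      rw [ofRuns_succ_cons, Bool.not_not] at hone
      simp only [zero_add, List.replicate_one, ofRuns_succ_cons, Bool.not_not, List.cons_append,
        List.nil_append, stateGF_two_one_cons_cons, stateGF_three_one_cons_not_cons, hone,
        uniqueGF, add_tsub_cancel_right, Nat.reduceAdd, Nat.add_one_sub_one, excessFactor,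
        ↓reduceIte, reduceCtorEq]
      linear_combination -(X ^ 5 * geom * (geom * X) ^ t * uniqueGF S) * hgeom
  · have hdead (q : List Bool) : stateGF (some x) (x :: x :: q) [3, 1] 4 = 0 :=
      stateGF_cons_cons_eq_zero (by simp)
    simp [excessFactor, List.replicate_succ, stateGF_two_one_cons_cons, hdead]

theorem stateGF_ofRuns_four {S : List ℕ} (hS : 0 ∉ S) (x : Bool) :
    stateGF (some !x) (ofRuns x S) [1] 4 = uniqueGF S * interiorFactor S := by
  induction S generalizing x with
  | nil => simp [ofRuns, stateGF_nil_of_ne, interiorFactor, fourFactor]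
  | cons s S ih =>
    obtain ⟨hs, hS'⟩ := List.ne_and_not_mem_of_not_mem_cons hS
    have hone : stateGF (some x) (ofRuns (!x) S) [1] 1 = uniqueGF S := by
      simpa using stateGF_ofRuns_one hS' (!x)
    have htwo : stateGF (some x) (ofRuns (!x) S) [1] 2 =
        uniqueGF S * (X * (S.count 1 : ℤ⟦X⟧)) := by
      simpa using stateGF_ofRuns_two hS' (!x)
    have ih : stateGF (some x) (ofRuns (!x) S) [1] 4 = uniqueGF S * interiorFactor S := by
      simpa using ih hS' (!x)
    rcases s with _ | _ | s
    · contradiction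
    · have hthree : stateGF (some x) (ofRuns (!x) S) [3] 4 = 0 :=
        stateGF_singleton_eq_zero (by decide)
      rw [ofRuns_succ_cons, List.replicate_zero, List.nil_append,
        stateGF_some_not_cons_eq_sum (head?_ofRuns_not_ne hS' x)]
      simp only [Finset.sum_range_succ, Finset.sum_range_zero, Nat.reduceAdd,
        stateGF_singleton_mul _ _ 1 four_ne_zero, stateGF_singleton_mul _ _ 2 two_ne_zero,
        hone, htwo, hthree, ih, interiorFactor_one_cons, uniqueGF]
      ring
    · rw [ofRuns_succ_cons, List.replicate_succ, List.cons_append, stateGF_some_not_cons_cons,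
        X_sq_mul_stateGF_two_one hS', ← List.cons_append, ← List.replicate_succ,
        stateGF_some_replicate_append, ih, interiorFactor_cons, uniqueGF]
      simp only [Nat.add_one_sub_one]
      ring

theorem stateGF_none_not_cons_not_cons (x : Bool) (q : List Bool) :
    stateGF none (x :: (!x) :: (!x) :: q) [1, 1, 1] 4 =
      X ^ 2 * stateGF (some !x) ((!x) :: q) [3, 1] 4 := by
  have hdead {g : Option Bool} {a : List ℕ} (h : 4 < a.sum) :
      stateGF g (x :: (!x) :: (!x) :: q) a 4 = 0 := stateGF_eq_zero_of_lt h
  have hdead' {a : ℕ} (h : 2 < a) : stateGF (some x) ((!x) :: (!x) :: q) [a, 1] 4 = 0 :=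
    stateGF_cons_cons_eq_zero (by simp; omega)
  have hone : stateGF none (x :: (!x) :: (!x) :: q) [1, 2, 1] 4 = 0 := by
    rw [stateGF_cons]
    simp [advance, hdead, hdead']
  have htwo : stateGF (some x) ((!x) :: (!x) :: q) [2, 1] 4 =
      X * stateGF (some !x) ((!x) :: q) [3, 1] 4 := by
    have hfive : stateGF (some x) ((!x) :: (!x) :: q) [2, 3, 1] 4 = 0 :=
      stateGF_eq_zero_of_lt (by simp)
    rw [stateGF_cons]
    simp [advance, hfive]
  rw [stateGF_cons]
  simp only [reduceCtorEq, ↓reduceIte, advance, add_zero, Bool.not_eq_eq_eq_not, Bool.eq_not_self,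
    Nat.reduceAdd, one_ne_zero, List.sum_cons, List.sum_nil, Nat.lt_add_one, hdead, List.tail_cons,
    htwo, hone, zero_add]
  ring

theorem stateGF_none_not_cons_cons_cons (x y : Bool) (q : List Bool) :
    stateGF none (x :: (!x) :: x :: y :: q) [1, 1, 1] 4 = 0 := by
  have hdead {g : Option Bool} {q : List Bool} {a : List ℕ} (h : 4 < a.sum) :
      stateGF g q a 4 = 0 := stateGF_eq_zero_of_lt h
  have hone : stateGF none (x :: (!x) :: x :: y :: q) [1, 1, 2] 4 = 0 := by
    rw [stateGF_cons]
    simp [advance, hdead]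
  have htwo : stateGF (some x) ((!x) :: x :: y :: q) [2, 1, 1] 4 = 0 := by
    rw [stateGF_cons]
    obtain rfl | rfl := Bool.eq_or_eq_not y x
    · have hyy : stateGF (some !y) (y :: y :: q) [3, 1] 4 = 0 :=
        stateGF_cons_cons_eq_zero (by simp)
      simp [advance, hdead, hyy]
    · simp [advance, hdead]
  rw [stateGF_cons]
  simp [advance, hdead, hone, htwo]

theorem stateGF_none_not_cons_singleton (x : Bool) :
    stateGF none [x, !x, x] [1, 1, 1] 4 = X ^ 3 * geom := by
  have hdead {g : Option Bool} {q : List Bool} {a : List ℕ} (h : 4 < a.sum) :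
      stateGF g q a 4 = 0 := stateGF_eq_zero_of_lt h
  have hone : stateGF none [x, !x, x] [1, 1, 2] 4 = 0 := by
    rw [stateGF_cons]
    simp [advance, hdead]
  have htwo : stateGF (some x) [!x, x] [2, 1, 1] 4 = X ^ 2 * geom := by
    have hthree : stateGF (some !x) [x] [3, 1] 4 = X * geom := by
      rw [stateGF_cons]
      simp [advance, hdead, stateGF_nil]
    rw [stateGF_cons]
    simp only [Bool.not_not, ↓reduceIte, advance, add_zero, Nat.reduceAdd, Bool.not_eq_eq_eq_not,
      Bool.eq_not_self, List.tail_cons, hthree, Option.some.injEq, List.sum_cons, List.sum_nil,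
      Nat.reduceLT, hdead, zero_add]
    ring
  rw [stateGF_cons]
  simp only [reduceCtorEq, ↓reduceIte, advance, add_zero, Bool.not_eq_eq_eq_not, Bool.eq_not_self,
    Nat.reduceAdd, hone, one_ne_zero, List.tail_cons, htwo, List.sum_cons, List.sum_nil,
    Nat.lt_add_one, hdead, zero_add]
  ring

theorem stateGF_none_not_singleton (x : Bool) :
    stateGF none [x, !x] [1, 1, 1] 4 = 2 * X ^ 3 * geom := by
  have hdead {g : Option Bool} {q : List Bool} {a : List ℕ} (h : 4 < a.sum) :
      stateGF g q a 4 = 0 := stateGF_eq_zero_of_lt h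
  have htwo : stateGF (some x) [!x] [2, 2] 4 = X * geom := by
    rw [stateGF_cons]
    simp [advance, hdead, stateGF_nil]
  have hone : stateGF none [x, !x] [1, 1, 2] 4 = X ^ 2 * geom := by
    rw [stateGF_cons]
    simp only [reduceCtorEq, ↓reduceIte, advance, add_zero, Bool.not_eq_eq_eq_not,
      Bool.eq_not_self, Nat.reduceAdd, List.sum_cons, List.sum_nil, Nat.lt_add_one, hdead,
      List.tail_cons, htwo, zero_add]
    ring
  have hthree : stateGF (some x) [!x] [3, 1] 4 = X * geom := by
    rw [stateGF_cons]
    simp [advance, hdead, stateGF_nil]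
  have hsnd : stateGF none [x, !x] [1, 2, 1] 4 = X ^ 2 * geom := by
    rw [stateGF_cons]
    simp only [reduceCtorEq, ↓reduceIte, advance, add_zero, Bool.not_eq_eq_eq_not,
      Bool.eq_not_self, Nat.reduceAdd, List.sum_cons, List.sum_nil, Nat.reduceLT, hdead,
      List.tail_cons, hthree, Nat.lt_add_one, zero_add]
    ring
  have hzero : stateGF (some x) [!x] [2, 1] 4 = 0 := by
    rw [stateGF_cons]
    simp [advance, hdead, stateGF_nil_of_ne]
  rw [stateGF_cons]
  simp only [reduceCtorEq, ↓reduceIte, advance, add_zero, Bool.not_eq_eq_eq_not, Bool.eq_not_self,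
    Nat.reduceAdd, hone, List.tail_cons, hzero, hsnd, zero_add]
  ring

theorem X_sq_mul_stateGF_none {S : List ℕ} (hS : 0 ∉ S) (h3 : 3 ≤ S.sum) (x : Bool) :
    X ^ 2 * stateGF none (x :: ofRuns (!x) S) [1, 1, 1] 4 =
      uniqueGF (1 :: S) * if S.head? = some 2 then X ^ 2 * (1 - X) else 0 := by
  rcases S with _ | ⟨_ | _ | _ | t, S⟩
  · simp at h3
  · simp at hS
  · rcases S with _ | ⟨_ | t, S⟩
    · simp at h3
    · simp at hS
    · rcases t with _ | t
      · rcases S with _ | ⟨_ | v, S⟩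
        · simp at h3
        · simp at hS
        · simp [ofRuns_succ_cons, stateGF_none_not_cons_cons_cons]
      · simp [ofRuns_succ_cons, List.replicate_succ, stateGF_none_not_cons_cons_cons]
  · rcases S with _ | ⟨_ | t, S⟩
    · simp at h3
    · simp at hS
    · have hone : stateGF (some !x) (ofRuns x ((t + 1) :: S)) [1] 1 = uniqueGF ((t + 1) :: S) :=
        stateGF_ofRuns_one (by simpa using hS) x
      have hthree := stateGF_three_one_cons_not_cons (!x) (List.replicate t x ++ ofRuns (!x) S)
      rw [ofRuns_succ_cons] at hone
      rw [Bool.not_not, hone] at hthree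
      simp only [zero_add, Nat.reduceAdd, ofRuns_succ_cons, List.replicate_one, Bool.not_not,
        List.cons_append, List.nil_append, stateGF_none_not_cons_not_cons, hthree, uniqueGF,
        add_tsub_cancel_right, tsub_self, pow_zero, mul_one, Nat.add_one_sub_one, pow_one,
        List.head?_cons, ↓reduceIte]
      linear_combination -(X ^ 5 * X * (geom * X) ^ t * uniqueGF S) * geom_mul_one_sub_X
  · have hdead (q : List Bool) : stateGF (some !x) ((!x) :: (!x) :: q) [3, 1] 4 = 0 :=
      stateGF_cons_cons_eq_zero (by simp)
    simp [ofRuns_succ_cons, List.replicate_succ, stateGF_none_not_cons_not_cons, hdead]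

theorem stateGF_none_ofRuns_one_cons {S : List ℕ} (hS : 0 ∉ S) (h3 : 3 ≤ S.sum) (x : Bool) :
    stateGF none (ofRuns x (1 :: S)) [1] 4 = geom * uniqueGF (1 :: S) *
      (interiorFactor (1 :: S) + if S.head? = some 2 then X ^ 2 * (1 - X) else 0) := by
  have hfour := stateGF_ofRuns_four (S := 1 :: S) (by simp [hS]) x
  have hfirst := X_sq_mul_stateGF_none hS h3 x
  rcases S with _ | ⟨_ | t, S⟩
  · simp at h3
  · simp at hS
  · simp only [ofRuns_succ_cons, List.replicate_zero, List.nil_append, Bool.not_not]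
      at hfour hfirst ⊢
    rw [stateGF_none_cons_not_cons, hfour, hfirst]
    ring

theorem stateGF_none_ofRuns_cons {s : ℕ} {S : List ℕ} (hS : 0 ∉ S) (h4 : 4 ≤ s + 2 + S.sum)
    (x : Bool) :
    stateGF none (ofRuns x ((s + 2) :: S)) [1] 4 = geom * uniqueGF ((s + 2) :: S) *
      (interiorFactor S + if s + 2 = 3 then X else 0) := by
  have hfour : stateGF (some x) (ofRuns (!x) S) [1] 4 = uniqueGF S * interiorFactor S := by
    simpa using stateGF_ofRuns_four hS (!x)
  have hexcess : geom * excessFactor (s + 2) S = if s + 2 = 3 then X else 0 := by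
    have hne : ¬ (s + 2 = 2 ∧ S = [1]) := by
      rintro ⟨hs, rfl⟩
      simp only [List.sum_cons, List.sum_nil] at h4
      omega
    rw [excessFactor, if_neg hne]
    split_ifs with hs h
    · simp only [h, List.sum_nil] at h4
      omega
    · linear_combination X * geom_mul_one_sub_X
    · exact mul_zero _
  have hfirst := X_sq_mul_stateGF_two_one hS x s
  have hrest : stateGF (some x) (x :: (List.replicate s x ++ ofRuns (!x) S)) [1] 4 =
      (geom * X) ^ (s + 1) * (uniqueGF S * interiorFactor S) := by
    simpa [List.replicate_succ, hfour] using
      stateGF_some_replicate_append x (s + 1) (ofRuns (!x) S) 4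
  rw [ofRuns_succ_cons, List.replicate_succ, List.cons_append, stateGF_none_cons_cons,
    hrest, ← hexcess]
  have hunique : uniqueGF ((s + 2) :: S) = X * (geom * X) ^ (s + 1) * uniqueGF S := rfl
  linear_combination geom ^ 2 * hfirst - geom * interiorFactor S * hunique

theorem length_ofRuns (x : Bool) (S : List ℕ) : (ofRuns x S).length = S.sum := by
  induction S generalizing x with
  | nil => rfl
  | cons s S ih => simp [ofRuns, ih]

theorem exists_eq_ofRuns (p : List Bool) : ∃ x S, 0 ∉ S ∧ p = ofRuns x S := by
  induction p with
  | nil => exact ⟨true, [], List.not_mem_nil, rfl⟩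
  | cons c p ih =>
    obtain ⟨x, S, hS, rfl⟩ := ih
    rcases S with _ | ⟨s, S⟩
    · exact ⟨c, [1], by simp, rfl⟩
    · obtain rfl | rfl := Bool.eq_or_eq_not c x
      · exact ⟨c, (s + 1) :: S, by simp_all, rfl⟩
      · exact ⟨!x, 1 :: s :: S, by simp_all, by simp [ofRuns]⟩

theorem map_length_runs_ofRuns {S : List ℕ} (hS : 0 ∉ S) (x : Bool) :
    (runs (ofRuns x S)).map List.length = S := by
  induction S generalizing x with
  | nil => rfl
  | cons s S ih =>
    obtain ⟨hs, hS⟩ := List.ne_and_not_mem_of_not_mem_cons hS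
    have hbreak : ∀ a ∈ (List.replicate s x).getLast?, ∀ b ∈ (ofRuns (!x) S).head?,
        (a == b) = false := by
      intro a ha b hb
      obtain rfl : a = x := List.eq_of_mem_replicate (List.mem_of_mem_getLast? ha)
      rw [beq_eq_false_iff_ne]
      rintro rfl
      exact head?_ofRuns_not_ne hS a hb
    have hrun : (List.replicate s x).splitBy (· == ·) = [List.replicate s x] :=
      List.splitBy_of_isChain (by simpa using hs.symm) (List.isChain_replicate_of_rel s (by simp))
    have ih : ((ofRuns (!x) S).splitBy (· == ·)).map List.length = S := ih hS (!x)
    rw [ofRuns, runs, List.splitBy_append hbreak, hrun, List.map_append, ih]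
    simp

theorem runs_reverse (p : List Bool) : runs p.reverse = ((runs p).map List.reverse).reverse := by
  obtain ⟨hflatten, hnil, hchain, hbreak⟩ := List.splitBy_eq_iff.1 (rfl : _ = runs p)
  refine List.splitBy_eq_iff.2 ⟨?_, by simpa using hnil, ?_, ?_⟩
  · rw [← List.reverse_flatten, ← hflatten]
  · simp only [List.mem_reverse, List.mem_map]
    rintro _ ⟨m, hm, rfl⟩
    exact List.isChain_reverse.2 ((hchain m hm).imp fun _ _ h => beq_iff_eq.2 (beq_iff_eq.1 h).symm)
  · rw [List.isChain_reverse, List.isChain_map]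
    refine hbreak.imp ?_
    rintro a b ⟨ha, hb, hab⟩
    refine ⟨by simpa using hb, by simpa using ha, ?_⟩
    rw [beq_eq_false_iff_ne] at hab ⊢
    simpa using hab.symm

theorem map_length_runs_reverse (p : List Bool) :
    (runs p.reverse).map List.length = ((runs p).map List.length).reverse := by
  simp [runs_reverse, Function.comp_def]

theorem count_eq_count_dropLast_add {α : Type*} [DecidableEq α] (a : α) (l : List α) :
    l.count a = l.dropLast.count a + if l.getLast? = some a then 1 else 0 := by
  rcases l.eq_nil_or_concat with rfl | ⟨l, b, rfl⟩
  · simp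
  · simp [List.count_singleton]

theorem length_le_sum {S : List ℕ} (hS : 0 ∉ S) : S.length ≤ S.sum :=
  List.length_le_sum_of_one_le S fun _ hs => Nat.one_le_iff_ne_zero.2 (ne_of_mem_of_not_mem hs hS)

theorem uniqueGF_eq {S : List ℕ} (hS : 0 ∉ S) :
    uniqueGF S = X ^ S.sum * geom ^ (S.sum - S.length + 1) := by
  induction S with
  | nil => simp [uniqueGF]
  | cons s S ih =>
    obtain ⟨hs, hS'⟩ := List.ne_and_not_mem_of_not_mem_cons hS
    obtain ⟨s, rfl⟩ := Nat.exists_eq_succ_of_ne_zero hs.symm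
    have hlen := length_le_sum hS'
    have hexp : ((s + 1) :: S).sum - ((s + 1) :: S).length = s + (S.sum - S.length) := by
      simp only [List.sum_cons, List.length_cons]
      omega
    rw [uniqueGF, ih hS', Nat.succ_eq_add_one, hexp, List.sum_cons, Nat.add_sub_cancel]
    ring

theorem numRuns_ofRuns {S : List ℕ} (hS : 0 ∉ S) (x : Bool) :
    numRuns (ofRuns x S) = S.length := by
  rw [numRuns, ← List.length_map (f := List.length), map_length_runs_ofRuns hS]

theorem numRunsOfSize_ofRuns {S : List ℕ} (hS : 0 ∉ S) (x : Bool) (i : ℕ) :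
    numRunsOfSize (ofRuns x S) i = S.count i := by
  rw [numRunsOfSize, map_length_runs_ofRuns hS]

theorem numBoundaryRunsOfSize_ofRuns_cons {s : ℕ} {S : List ℕ} (hS : 0 ∉ s :: S) (x : Bool)
    (i : ℕ) :
    numBoundaryRunsOfSize (ofRuns x (s :: S)) i =
      (if s = i then 1 else 0) + if S.getLast? = some i then 1 else 0 := by
  rw [numBoundaryRunsOfSize, map_length_runs_ofRuns hS, numRuns_ofRuns hS]
  rcases S with _ | ⟨t, S⟩
  · simp
  · simp [List.getLast?_cons]

theorem r12b_ofRuns_cons {s : ℕ} {S : List ℕ} (hS : 0 ∉ s :: S) (x : Bool) :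
    r12b (ofRuns x (s :: S)) =
      (if s = 1 ∧ S.head? = some 2 then 1 else 0) + if [2, 1] <:+ s :: S then 1 else 0 := by
  have hrev : (s :: S).reverse.take 2 = [1, 2] ↔ [2, 1] <:+ s :: S := by
    rw [← List.reverse_prefix, List.prefix_iff_eq_take, eq_comm]
    rfl
  rw [r12b, map_length_runs_reverse, map_length_runs_ofRuns hS]
  simp only [hrev]
  rcases S with _ | ⟨t, S⟩ <;> simp

theorem numRunsOfSize_sub_numBoundaryRunsOfSize {s : ℕ} {S : List ℕ} (hS : 0 ∉ s :: S) (x : Bool)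
    (i : ℕ) :
    numRunsOfSize (ofRuns x (s :: S)) i - numBoundaryRunsOfSize (ofRuns x (s :: S)) i =
      S.dropLast.count i := by
  rw [numRunsOfSize_ofRuns hS, numBoundaryRunsOfSize_ofRuns_cons hS, List.count_cons,
    count_eq_count_dropLast_add i S]
  simp only [beq_iff_eq]
  omega

theorem lengthGF_occ (p : List Bool) {k : ℕ} (hk : k ≠ 0) :
    lengthGF {w | occ p w = k} = stateGF none p [1] k := by
  have hpos (w : List Bool) : 0 < occ p w ∧ occ p w = k ↔ occ p w = k := by omega
  simp [stateGF, states, weightedOcc_singleton, hpos]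

theorem fourFactor_add (c i b f b' f' : ℕ) :
    fourFactor c i b f + fourFactor 0 0 b' f' = fourFactor c i (b + b') (f + f') := by
  simp only [fourFactor, Nat.choose_zero_succ, Nat.cast_add, Nat.cast_zero]
  ring

theorem stateGF_none_ofRuns {s : ℕ} {S : List ℕ} (hS : 0 ∉ s :: S) (h4 : 4 ≤ (s :: S).sum)
    (x : Bool) :
    stateGF none (ofRuns x (s :: S)) [1] 4 = geom * uniqueGF (s :: S) *
      fourFactor ((s :: S).count 1) (S.dropLast.count 3)
        (numBoundaryRunsOfSize (ofRuns x (s :: S)) 3) (r12b (ofRuns x (s :: S))) := by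
  rw [numBoundaryRunsOfSize_ofRuns_cons hS, r12b_ofRuns_cons hS]
  obtain ⟨hs, hS'⟩ := List.ne_and_not_mem_of_not_mem_cons hS
  rw [List.sum_cons] at h4
  obtain rfl | ⟨s, rfl⟩ : s = 1 ∨ ∃ t, s = t + 2 :=
    or_iff_not_imp_left.2 fun h => ⟨s - 2, by omega⟩
  · rw [stateGF_none_ofRuns_one_cons hS' (by omega), interiorFactor]
    rcases S with _ | ⟨t, S⟩
    · simp at h4
    · have hfirst : (if (t :: S).head? = some 2 then X ^ 2 * (1 - X) else 0) =
          fourFactor 0 0 0 (if (t :: S).head? = some 2 then 1 else 0) := by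
        split_ifs <;> simp [fourFactor]
      rw [hfirst, fourFactor_add]
      simp [add_comm]
  · have hfirst : (if s + 2 = 3 then X else 0) =
        fourFactor 0 0 (if s + 2 = 3 then 1 else 0) 0 := by
      split_ifs <;> simp [fourFactor]
    have hlast : [2, 1] <:+ (s + 2) :: S ↔ [2, 1] <:+ S := by
      rw [List.suffix_cons_iff, or_iff_right]
      rintro h
      obtain ⟨hs, rfl⟩ := List.cons.inj h
      simp only [List.sum_cons, List.sum_nil] at h4
      omega
    rw [stateGF_none_ofRuns_cons hS' (by omega), hfirst, interiorFactor, fourFactor_add]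
    simp [hlast, add_comm]

theorem lengthGF_occ_four {p : List Bool} (hp : 4 ≤ p.length) :
    lengthGF {w | occ p w = 4} = X ^ p.length * geom ^ (p.length - numRuns p + 2) *
      fourFactor (numRunsOfSize p 1) (numRunsOfSize p 3 - numBoundaryRunsOfSize p 3)
        (numBoundaryRunsOfSize p 3) (r12b p) := by
  obtain ⟨x, S, hS, rfl⟩ := exists_eq_ofRuns p
  rw [length_ofRuns] at hp
  rcases S with _ | ⟨s, S⟩
  · simp at hp
  · rw [lengthGF_occ _ four_ne_zero, stateGF_none_ofRuns hS hp, uniqueGF_eq hS,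
      numRunsOfSize_sub_numBoundaryRunsOfSize hS, numRunsOfSize_ofRuns hS, length_ofRuns,
      numRuns_ofRuns hS]
    ring

theorem coeff_mul_fourFactor {r m n c i b f : ℕ} (h : m = 0 → i = 0 ∧ f = 0) :
    coeff n (X ^ (r + m) * geom ^ (m + 2) * fourFactor c i b f) =
      c * ((n - r - 2).choose (m + 1) : ℤ) + c.choose 2 * ((n - r - 1).choose (m + 1) : ℤ) +
        i * ((n - r - 1).choose m : ℤ) + b * ((n - r).choose (m + 1) : ℤ) +
        f * ((n - r - 2).choose m : ℤ) := by
  have hexpand : X ^ (r + m) * geom ^ (m + 2) * fourFactor c i b f =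
      (c : ℤ⟦X⟧) * (X ^ (r + m + 3) * geom ^ (m + 1 + 1)) +
        (c.choose 2 : ℤ⟦X⟧) * (X ^ (r + m + 2) * geom ^ (m + 1 + 1)) +
        (i : ℤ⟦X⟧) * (X ^ (r + m + 1) * geom ^ (m + 1)) +
        (b : ℤ⟦X⟧) * (X ^ (r + m + 1) * geom ^ (m + 1 + 1)) +
        (f : ℤ⟦X⟧) * (X ^ (r + m + 2) * geom ^ (m + 1)) := by
    rw [fourFactor]
    linear_combination ((i : ℤ⟦X⟧) * X ^ (r + m + 1) * geom ^ (m + 1) +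
      (f : ℤ⟦X⟧) * X ^ (r + m + 2) * geom ^ (m + 1)) * geom_mul_one_sub_X
  have hcast (a : ℕ) : (a : ℤ⟦X⟧) = C (a : ℤ) := (map_natCast C a).symm
  have hsub (j : ℕ) : n + m - (r + m + j) = n - r - j := by omega
  have hsub' (j : ℕ) : n + (m + 1) - (r + m + (j + 1)) = n - r - j := by omega
  have hm {a j : ℕ} (ha : m = 0 → a = 0) :
      (a : ℤ) * coeff n (X ^ (r + m + j) * geom ^ (m + 1)) =
        a * ((n - r - j).choose m : ℤ) := by
    rcases eq_or_ne m 0 with h0 | h0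
    · simp [ha h0]
    · rw [coeff_X_pow_mul_geom_pow n h0, hsub]
  rw [hexpand]
  simp only [map_add, hcast, coeff_C_mul, hm fun h0 => (h h0).1, hm fun h0 => (h h0).2,
    coeff_X_pow_mul_geom_pow n m.succ_ne_zero, hsub', Nat.sub_zero]

theorem numRuns_le_length (p : List Bool) : numRuns p ≤ p.length := by
  obtain ⟨x, S, hS, rfl⟩ := exists_eq_ofRuns p
  rw [numRuns_ofRuns hS, length_ofRuns]
  exact length_le_sum hS

theorem eq_one_of_sum_le_length {S : List ℕ} (hS : 0 ∉ S) (h : S.sum ≤ S.length) :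
    ∀ s ∈ S, s = 1 := by
  induction S with
  | nil => simp
  | cons s S ih =>
    obtain ⟨hs, hS'⟩ := List.ne_and_not_mem_of_not_mem_cons hS
    have hlen := length_le_sum hS'
    simp only [List.sum_cons, List.length_cons] at h
    exact List.forall_mem_cons.2 ⟨by omega, ih hS' (by omega)⟩

theorem eq_one_of_mem_map_length_runs {p : List Bool} (h : p.length ≤ numRuns p) {s : ℕ}
    (hs : s ∈ (runs p).map List.length) : s = 1 := by
  obtain ⟨x, S, hS, rfl⟩ := exists_eq_ofRuns p
  rw [length_ofRuns, numRuns_ofRuns hS] at h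
  rw [map_length_runs_ofRuns hS] at hs
  exact eq_one_of_sum_le_length hS h s hs

theorem numRunsOfSize_eq_zero {p : List Bool} (h : p.length ≤ numRuns p) {i : ℕ} (hi : i ≠ 1) :
    numRunsOfSize p i = 0 :=
  List.count_eq_zero_of_not_mem fun hmem => hi (eq_one_of_mem_map_length_runs h hmem)

theorem r12b_eq_zero {p : List Bool} (h : p.length ≤ numRuns p) : r12b p = 0 := by
  have hne {L : List ℕ} (hL : ∀ s ∈ L, s ∈ (runs p).map List.length) : L.take 2 ≠ [1, 2] := by
    intro htake
    have htwo : 2 ∈ L := List.mem_of_mem_take (i := 2) (by simp [htake])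
    exact absurd (eq_one_of_mem_map_length_runs h (hL 2 htwo)) (by decide)
  rw [r12b, map_length_runs_reverse, if_neg (hne fun _ hs => hs),
    if_neg (hne fun _ hs => List.mem_reverse.1 hs)]

theorem B_four_of_four_le_length (n : ℕ) {p : List Bool} (hp : 4 ≤ p.length) :
    B n p 4 =
      numRunsOfSize p 1 * (n - numRuns p - 2).choose (p.length + 1 - numRuns p) +
      (numRunsOfSize p 1).choose 2 * (n - numRuns p - 1).choose (p.length + 1 - numRuns p) +
      (numRunsOfSize p 3 - numBoundaryRunsOfSize p 3) *
        (n - numRuns p - 1).choose (p.length - numRuns p) +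
      numBoundaryRunsOfSize p 3 * (n - numRuns p).choose (p.length + 1 - numRuns p) +
      r12b p * (n - numRuns p - 2).choose (p.length - numRuns p) := by
  have hle := numRuns_le_length p
  have hzero (h : p.length - numRuns p = 0) :
      numRunsOfSize p 3 - numBoundaryRunsOfSize p 3 = 0 ∧ r12b p = 0 := by
    rw [Nat.sub_eq_zero_iff_le] at h
    exact ⟨by rw [numRunsOfSize_eq_zero h (by decide), Nat.zero_sub], r12b_eq_zero h⟩
  have hcoeff := coeff_mul_fourFactor (r := numRuns p) (n := n) (c := numRunsOfSize p 1)
    (b := numBoundaryRunsOfSize p 3) hzero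
  rw [Nat.add_sub_cancel' hle, ← lengthGF_occ_four hp, ← B_eq_coeff_lengthGF,
    ← Nat.sub_add_comm hle] at hcoeff
  exact_mod_cast hcoeff

/-! ### Short patterns -/

theorem B_replicate {s k m : ℕ} (h : ∀ c : ℕ, c.choose s = k ↔ c = m) (hm : m ≠ 0) (n : ℕ)
    (x : Bool) : B n (List.replicate s x) k = n.choose m := by
  have hset : {w | occ (List.replicate s x) w = k} = {w | w.count x = m} := by
    ext w
    rw [Set.mem_ofPred_eq, occ_replicate, h, Set.mem_ofPred_eq]
  have hcoeff := B_eq_coeff_lengthGF n (List.replicate s x) k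
  rw [hset, lengthGF_count_eq, coeff_X_pow_mul_geom_pow n hm, Nat.add_sub_cancel] at hcoeff
  exact_mod_cast hcoeff

theorem choose_three_eq_four_iff {m : ℕ} : m.choose 3 = 4 ↔ m = 4 := by
  refine ⟨fun h => ?_, by rintro rfl; rfl⟩
  have hm : m < 5 := (Nat.choose_mono 3).reflect_lt (by rw [h]; decide)
  interval_cases m <;> simp_all [Nat.choose]

theorem choose_two_ne_four (m : ℕ) : m.choose 2 ≠ 4 := by
  intro h
  have hm : m < 5 := (Nat.choose_mono 2).reflect_lt (by rw [h]; decide)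
  interval_cases m <;> simp_all [Nat.choose]

theorem B_replicate_two_four (n : ℕ) (x : Bool) : B n (List.replicate 2 x) 4 = 0 := by
  have hempty : {w | occ (List.replicate 2 x) w = 4} = ∅ :=
    Set.eq_empty_of_forall_notMem fun w hw =>
      choose_two_ne_four (w.count x) ((occ_replicate 2 x w).symm.trans hw)
  have hcoeff := B_eq_coeff_lengthGF n (List.replicate 2 x) 4
  rw [hempty, lengthGF_empty, map_zero] at hcoeff
  exact_mod_cast hcoeff

theorem stateGF_none_pair (x : Bool) :
    stateGF none [x, !x] [1] 4 = 4 * (X ^ 5 * geom ^ 2) + X ^ 4 * geom ^ 2 := by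
  have hfour : stateGF (some !x) [x, !x] [1] 4 = X * (X * geom) * (2 * X ^ 3 + X ^ 2) := by
    simpa [ofRuns, interiorFactor, fourFactor, uniqueGF, List.suffix_cons_iff] using
      stateGF_ofRuns_four (S := [1, 1]) (by decide) x
  rw [stateGF_none_cons_not_cons, stateGF_none_not_singleton, hfour]
  ring

theorem stateGF_none_alternating_three (x : Bool) :
    stateGF none [x, !x, x] [1] 4 = 3 * (X ^ 6 * geom ^ 2) + 4 * (X ^ 5 * geom ^ 2) := by
  have hfour : stateGF (some !x) [x, !x, x] [1] 4 =
      X * (X * (X * geom)) * (3 * X ^ 3 + 3 * X ^ 2) := by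
    simpa [ofRuns, interiorFactor, fourFactor, uniqueGF, List.suffix_cons_iff] using
      stateGF_ofRuns_four (S := [1, 1, 1]) (by decide) x
  rw [stateGF_none_cons_not_cons, stateGF_none_not_cons_singleton, hfour]
  ring

theorem stateGF_none_one_two (x : Bool) :
    stateGF none [x, !x, !x] [1] 4 = X ^ 6 * geom ^ 3 + X ^ 5 * geom ^ 3 := by
  have hfour : stateGF (some !x) [x, !x, !x] [1] 4 = X * (X * (geom * X) * geom) * X ^ 3 := by
    simpa [ofRuns, interiorFactor, fourFactor, uniqueGF, List.suffix_cons_iff] using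
      stateGF_ofRuns_four (S := [1, 2]) (by decide) x
  rw [stateGF_none_cons_not_cons, stateGF_none_not_cons_not_cons, hfour]
  simp only [stateGF_three_one_singleton]
  ring

theorem stateGF_none_two_one (x : Bool) :
    stateGF none [x, x, !x] [1] 4 = X ^ 6 * geom ^ 3 + X ^ 5 * geom ^ 3 := by
  have hfour : stateGF (some x) [!x] [1] 4 = X * geom * X ^ 3 := by
    simpa [ofRuns, interiorFactor, fourFactor, uniqueGF, List.suffix_cons_iff] using
      stateGF_ofRuns_four (S := [1]) (by decide) (!x)
  rw [stateGF_none_cons_cons, stateGF_some_cons, hfour]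
  simp only [stateGF_two_one_pair]
  ring

theorem B_pair_four {n : ℕ} (hn : 5 ≤ n) (x : Bool) : B n [x, !x] 4 = 5 * n - 19 := by
  have hcoeff := B_eq_coeff_lengthGF n [x, !x] 4
  have hcast : (4 : ℤ⟦X⟧) = C 4 := rfl
  rw [lengthGF_occ _ four_ne_zero, stateGF_none_pair, hcast, map_add, coeff_C_mul,
    coeff_X_pow_mul_geom_pow n one_ne_zero, coeff_X_pow_mul_geom_pow n one_ne_zero,
    Nat.choose_one_right, Nat.choose_one_right] at hcoeff
  omega

theorem B_alternating_three_four {n : ℕ} (hn : 5 ≤ n) (x : Bool) :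
    B n [x, !x, x] 4 = 7 * n - 31 := by
  have hcoeff := B_eq_coeff_lengthGF n [x, !x, x] 4
  have hcast : (4 : ℤ⟦X⟧) = C 4 := rfl
  have hcast' : (3 : ℤ⟦X⟧) = C 3 := rfl
  rw [lengthGF_occ _ four_ne_zero, stateGF_none_alternating_three, hcast, hcast', map_add,
    coeff_C_mul, coeff_C_mul, coeff_X_pow_mul_geom_pow n one_ne_zero,
    coeff_X_pow_mul_geom_pow n one_ne_zero, Nat.choose_one_right, Nat.choose_one_right] at hcoeff
  omega

theorem choose_two_add_choose_two_succ (k : ℕ) : k.choose 2 + (k + 1).choose 2 = k ^ 2 := by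
  induction k with
  | zero => rfl
  | succ k ih =>
    rw [Nat.choose_succ_succ' (k + 1), Nat.choose_succ_succ' k, Nat.choose_one_right,
      Nat.choose_one_right] at *
    linear_combination ih

theorem B_four_eq_sq {n : ℕ} (hn : 5 ≤ n) {p : List Bool}
    (h : stateGF none p [1] 4 = X ^ 6 * geom ^ 3 + X ^ 5 * geom ^ 3) : B n p 4 = (n - 4) ^ 2 := by
  obtain ⟨k, rfl⟩ : ∃ k, n = k + 4 := Nat.exists_eq_add_of_le' (by omega)
  have hcoeff := B_eq_coeff_lengthGF (k + 4) p 4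
  rw [lengthGF_occ _ four_ne_zero, h, map_add, coeff_X_pow_mul_geom_pow _ two_ne_zero,
    coeff_X_pow_mul_geom_pow _ two_ne_zero] at hcoeff
  rw [Nat.add_sub_cancel, ← choose_two_add_choose_two_succ]
  exact_mod_cast hcoeff

theorem eq_replicate_of_numRuns_eq_one {p : List Bool} (h : numRuns p = 1) :
    ∃ x, p = List.replicate p.length x := by
  obtain ⟨x, S, hS, rfl⟩ := exists_eq_ofRuns p
  rw [numRuns_ofRuns hS] at h
  obtain ⟨s, rfl⟩ := List.length_eq_one_iff.1 h
  exact ⟨x, by simp [ofRuns]⟩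

theorem eq_ofRuns_replicate_one {p : List Bool} (h : numRuns p = p.length) :
    ∃ x, p = ofRuns x (List.replicate p.length 1) := by
  obtain ⟨x, S, hS, rfl⟩ := exists_eq_ofRuns p
  rw [numRuns_ofRuns hS, length_ofRuns] at h
  rw [length_ofRuns, ← h]
  exact ⟨x, congrArg _ (List.eq_replicate_of_mem (eq_one_of_sum_le_length hS h.ge))⟩

theorem eq_of_length_three_of_numRuns_two {p : List Bool} (hl : p.length = 3)
    (hr : numRuns p = 2) : ∃ x, p = [x, !x, !x] ∨ p = [x, x, !x] := by
  obtain ⟨x, S, hS, rfl⟩ := exists_eq_ofRuns p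
  rw [length_ofRuns] at hl
  rw [numRuns_ofRuns hS] at hr
  obtain ⟨s, t, rfl⟩ := List.length_eq_two.1 hr
  simp only [List.mem_cons, List.not_mem_nil, or_false, not_or] at hS
  simp only [List.sum_cons, List.sum_nil] at hl
  obtain ⟨rfl, rfl⟩ | ⟨rfl, rfl⟩ : s = 1 ∧ t = 2 ∨ s = 2 ∧ t = 1 := by omega
  · exact ⟨x, .inl rfl⟩
  · exact ⟨x, .inr rfl⟩

theorem B_four_of_numRuns_eq_one (n : ℕ) {p : List Bool} (hl : p.length = 1 ∨ p.length = 3)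
    (hr : numRuns p = 1) : B n p 4 = n.choose 4 := by
  obtain ⟨x, hp⟩ := eq_replicate_of_numRuns_eq_one hr
  rcases hl with hl | hl
  · rw [hp, hl]
    exact B_replicate (fun c => by rw [Nat.choose_one_right]) four_ne_zero n x
  · rw [hp, hl]
    exact B_replicate (fun _ => choose_three_eq_four_iff) four_ne_zero n x

theorem B_four_of_length_two_of_numRuns_one (n : ℕ) {p : List Bool} (hl : p.length = 2)
    (hr : numRuns p = 1) : B n p 4 = 0 := by
  obtain ⟨x, hp⟩ := eq_replicate_of_numRuns_eq_one hr
  rw [hp, hl, B_replicate_two_four]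

theorem B_four_of_length_two_of_numRuns_two {n : ℕ} (hn : 5 ≤ n) {p : List Bool}
    (hl : p.length = 2) (hr : numRuns p = 2) : B n p 4 = 5 * n - 19 := by
  obtain ⟨x, hp⟩ := eq_ofRuns_replicate_one (hr.trans hl.symm)
  rw [hp, hl]
  exact B_pair_four hn x

theorem B_four_of_length_three_of_numRuns_two {n : ℕ} (hn : 5 ≤ n) {p : List Bool}
    (hl : p.length = 3) (hr : numRuns p = 2) : B n p 4 = (n - 4) ^ 2 := by
  obtain ⟨x, rfl | rfl⟩ := eq_of_length_three_of_numRuns_two hl hr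
  · exact B_four_eq_sq hn (stateGF_none_one_two x)
  · exact B_four_eq_sq hn (stateGF_none_two_one x)

theorem B_four_of_length_three_of_numRuns_three {n : ℕ} (hn : 5 ≤ n) {p : List Bool}
    (hl : p.length = 3) (hr : numRuns p = 3) : B n p 4 = 7 * n - 31 := by
  obtain ⟨x, hp⟩ := eq_ofRuns_replicate_one (hr.trans hl.symm)
  have halt : ofRuns x (List.replicate 3 1) = [x, !x, x] := by simp [ofRuns]
  rw [hp, hl, halt, B_alternating_three_four hn]

end BinaryWord

theorem B_four_eq (p : List Bool) (l r r₁ r₃ r3b rb : ℕ) (hl : p.length = l)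
    (hr : numRuns p = r) (hr₁ : numRunsOfSize p 1 = r₁) (hr₃ : numRunsOfSize p 3 = r₃)
    (hr3b : numBoundaryRunsOfSize p 3 = r3b) (hrb : r12b p = rb)
    (n : ℕ) (hn : 5 ≤ n) :
    (4 ≤ l → B n p 4 = r₁ * (n - r - 2).choose (l + 1 - r)
        + r₁.choose 2 * (n - r - 1).choose (l + 1 - r)
        + (r₃ - r3b) * (n - r - 1).choose (l - r)
        + r3b * (n - r).choose (l + 1 - r)
        + rb * (n - r - 2).choose (l - r)) ∧
    (l < 4 →
      (l = 2 ∧ r = 1 → B n p 4 = 0) ∧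
      ((l = 1 ∨ l = 3) ∧ r = 1 → B n p 4 = n.choose 4) ∧
      (l = 3 ∧ r = 2 → B n p 4 = (n - 4) ^ 2) ∧
      (l = 2 ∧ r = 2 → B n p 4 = 5 * n - 19) ∧
      (l = 3 ∧ r = 3 → B n p 4 = 7 * n - 31)) := by
  subst hl hr hr₁ hr₃ hr3b hrb
  refine ⟨BinaryWord.B_four_of_four_le_length n, fun _ => ⟨?_, ?_, ?_, ?_, ?_⟩⟩
  · exact fun h => BinaryWord.B_four_of_length_two_of_numRuns_one n h.1 h.2
  · exact fun h => BinaryWord.B_four_of_numRuns_eq_one n h.1 h.2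
  · exact fun h => BinaryWord.B_four_of_length_three_of_numRuns_two hn h.1 h.2
  · exact fun h => BinaryWord.B_four_of_length_two_of_numRuns_two hn h.1 h.2
  · exact fun h => BinaryWord.B_four_of_length_three_of_numRuns_three hn h.1 h.2
end
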